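/- arXiv:2506.17932 — 2 statements merged into one kernel-verified Lean document; each statement's English description precedes it below -/
import Mathlib

section
/- Let X be a compact metric space, T: X → X a continuous map, and A = (t_i)_{i≥1} a sequence of natural numbers. Define K(A) = lim_{m→∞} limsup_{n→∞} (1/n)|S_A(n,m)|, where S_A(n,m) = {t_i + j : 1 ≤ i ≤ n, 0 ≤ j ≤ m−1}. Unless (K(A) = ∞ and h_top(T) = 0), the variational principle for sequence entropy holds: sup_{μ ∈ M_T(X)} h^A_μ(T) = h^A_top(T), where M_T(X) is the set of T-invariant Borel probability measures on X. -/
open Filter MeasureTheory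

variable {X : Type*} [MetricSpace X]

/-- `spaN T F ε` : the minimal cardinality of a set `E ⊆ X` such that every `x ∈ X`
satisfies `max_{i ∈ F} dist (T^[i] x) (T^[i] e) ≤ ε` for some `e ∈ E`. -/
noncomputable def spaN (T : X → X) (F : Finset ℕ) (ε : ℝ) : ℕ :=
  sInf {k : ℕ | ∃ E : Finset X, E.card = k ∧
    ∀ x : X, ∃ e ∈ E, ∀ i ∈ F, dist (T^[i] x) (T^[i] e) ≤ ε}

/-- Topological sequence entropy along the sequence `A = (t_i)_{i ≥ 1}`:
`h^A_top(T) = lim_{ε→0⁺} limsup_n (1/n) log spa(T,{t₁,…,t_n},ε)`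
(the limit as `ε → 0⁺` of the antitone-in-`ε` quantity is its supremum over `ε > 0`). -/
noncomputable def seqEntTop (T : X → X) (A : ℕ → ℕ) : EReal :=
  ⨆ (ε : ℝ) (_ : 0 < ε),
    Filter.limsup
      (fun n : ℕ =>
        ((Real.log (spaN T ((Finset.Icc 1 n).image A) ε) / n : ℝ) : EReal))
      Filter.atTop

/-- Topological entropy: topological sequence entropy along `t_i = i − 1`,
i.e. with index sets `{0,…,n−1}`. -/
noncomputable def htopN (T : X → X) : EReal := seqEntTop T (fun i => i - 1)

/-- A finite measurable partition of `X`, modelled with atoms indexed by `Fin k`. -/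
def IsMeasPartition {X : Type*} [MeasurableSpace X] {k : ℕ} (ξ : Fin k → Set X) : Prop :=
  (∀ i, MeasurableSet (ξ i)) ∧ Pairwise (Function.onFun Disjoint ξ) ∧ (⋃ i, ξ i) = Set.univ

/-- `H(ξ^F)` : the Shannon entropy of the join `⋁_{i∈F} T^{−i}ξ`, whose atoms are the
intersections `⋂_{i∈F} T^{−i} ξ(g i)` over all choices `g`. -/
noncomputable def Hjoin {X : Type*} [MeasurableSpace X] (μ : MeasureTheory.Measure X)
    (T : X → X) (F : Finset ℕ) {k : ℕ} (ξ : Fin k → Set X) : ℝ :=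
  ∑ g : {i // i ∈ F} → Fin k,
    Real.negMulLog (μ (⋂ i : {i // i ∈ F}, T^[(i : ℕ)] ⁻¹' ξ (g i))).toReal

/-- Measure-theoretic sequence entropy along `A = (t_i)_{i ≥ 1}`:
`h^A_μ(T) = sup_ξ limsup_n (1/n) H(ξ^{{t₁,…,t_n}})`, the supremum over all finite
measurable partitions `ξ`. -/
noncomputable def seqEntMeas {X : Type*} [MeasurableSpace X] (μ : MeasureTheory.Measure X)
    (T : X → X) (A : ℕ → ℕ) : EReal :=
  ⨆ (k : ℕ) (ξ : Fin k → Set X) (_ : IsMeasPartition ξ),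
    Filter.limsup
      (fun n : ℕ => ((Hjoin μ T ((Finset.Icc 1 n).image A) ξ / n : ℝ) : EReal))
      Filter.atTop

open Pointwise in
/-- `K(A) = lim_{m→∞} limsup_{n→∞} (1/n)|S_A(n,m)|` where
`S_A(n,m) = {t_i + j : 1 ≤ i ≤ n, 0 ≤ j ≤ m−1}` (the limit in `m` of the monotone-in-`m`
quantity is its supremum over `m`). -/
noncomputable def KA (A : ℕ → ℕ) : EReal :=
  ⨆ m : ℕ, Filter.limsup
    (fun n : ℕ =>
      (((((Finset.Icc 1 n).image A + Finset.range m).card : ℝ) / n : ℝ) : EReal))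
    Filter.atTop


/-! ### Finite entropy -/

open Real in
lemma negMulLog_sum_le {ι : Type*} (s : Finset ι) (p : ι → ℝ) (hp : ∀ i ∈ s, 0 ≤ p i) :
    negMulLog (∑ i ∈ s, p i) ≤ ∑ i ∈ s, negMulLog (p i) := by
  unfold negMulLog
  rw [neg_mul, Finset.sum_mul, ← Finset.sum_neg_distrib]
  refine Finset.sum_le_sum fun i hi => ?_
  rcases (hp i hi).eq_or_lt with h0 | h0
  · simp [← h0]
  · have h1 : p i ≤ ∑ i ∈ s, p i := Finset.single_le_sum hp hi
    have := Real.log_le_log h0 h1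
    nlinarith

open Real in
lemma ssa_aux {I J : Type*} [Fintype I] [Fintype J] (p : I → J → ℝ) (hp : ∀ i j, 0 ≤ p i j) :
    (∑ i, ∑ j, negMulLog (p i j)) + negMulLog (∑ i, ∑ j, p i j) ≤
      (∑ i, negMulLog (∑ j, p i j)) + ∑ j, negMulLog (∑ i, p i j) := by
  set a : I → ℝ := fun i => ∑ j, p i j with ha
  set b : J → ℝ := fun j => ∑ i, p i j with hb
  set c : ℝ := ∑ i, ∑ j, p i j with hc
  have ha0 : ∀ i, 0 ≤ a i := fun i => Finset.sum_nonneg fun j _ => hp i j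
  have hb0 : ∀ j, 0 ≤ b j := fun j => Finset.sum_nonneg fun i _ => hp i j
  have hca : ∑ i, a i = c := rfl
  have hcb : ∑ j, b j = c := by rw [hc, Finset.sum_comm]
  have hc0 : 0 ≤ c := hca ▸ Finset.sum_nonneg fun i _ => ha0 i
  have e1 : negMulLog c = ∑ i, ∑ j, -(p i j * log c) := by
    simp only [Finset.sum_neg_distrib, ← Finset.sum_mul, negMulLog, ← hc]; ring
  have e2 : ∑ i, negMulLog (a i) = ∑ i, ∑ j, -(p i j * log (a i)) := by
    refine Finset.sum_congr rfl fun i _ => ?_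
    simp only [Finset.sum_neg_distrib, ← Finset.sum_mul, negMulLog, ha]; ring
  have e3 : ∑ j, negMulLog (b j) = ∑ i, ∑ j, -(p i j * log (b j)) := by
    rw [Finset.sum_comm]
    refine Finset.sum_congr rfl fun i _ => ?_
    simp only [Finset.sum_neg_distrib, ← Finset.sum_mul, negMulLog, hb]; ring
  have e4 : (∑ i, ∑ j, (a i * b j / c - p i j)) = 0 := by
    simp only [Finset.sum_sub_distrib, ← Finset.sum_div, ← Finset.mul_sum, ← Finset.sum_mul, hca, hcb]
    rw [← hc]
    by_cases h : c = 0
    · simp [h]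
    · field_simp; ring
  change (∑ i, ∑ j, negMulLog (p i j)) + negMulLog c ≤ (∑ i, negMulLog (a i)) + ∑ j, negMulLog (b j)
  rw [e1, e2, e3, ← sub_nonpos, ← e4]
  simp only [← Finset.sum_add_distrib, ← Finset.sum_sub_distrib]
  refine Finset.sum_le_sum fun i _ => Finset.sum_le_sum fun j _ => ?_
  rcases (hp i j).eq_or_lt with h0 | h0
  · rw [← h0]
    simp only [negMulLog_zero, zero_mul, neg_zero, add_zero, sub_zero]
    have := ha0 i; have := hb0 j
    positivity
  · have h1 : 0 < a i := h0.trans_le (Finset.single_le_sum (fun j _ => hp i j) (Finset.mem_univ j))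
    have h2 : 0 < b j :=
      h0.trans_le (Finset.single_le_sum (f := fun i => p i j) (fun i _ => hp i j) (Finset.mem_univ i))
    have h3 : 0 < c := h1.trans_le (Finset.single_le_sum (fun i _ => ha0 i) (Finset.mem_univ i))
    have h4 : 0 < a i * b j / (c * p i j) := by positivity
    have := Real.log_le_sub_one_of_pos h4
    rw [Real.log_div (by positivity) (by positivity), Real.log_mul h1.ne' h2.ne',
      Real.log_mul h3.ne' h0.ne'] at this
    have h5 := mul_le_mul_of_nonneg_left this h0.le
    have h6 : p i j * (a i * b j / (c * p i j) - 1) = a i * b j / c - p i j := by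
      field_simp
    rw [h6] at h5
    unfold negMulLog
    linarith

/-- Finite-valued measurable function. -/
def FM {Y : Type*} [MeasurableSpace Y] {ι : Type*} (f : Y → ι) : Prop :=
  ∀ i, MeasurableSet (f ⁻¹' {i})

/-- Entropy of a finite-valued function. -/
noncomputable def Hf {Y : Type*} [MeasurableSpace Y] {ι : Type*} [Fintype ι] (μ : Measure Y)
    (f : Y → ι) : ℝ := ∑ i, Real.negMulLog (μ.real (f ⁻¹' {i}))


lemma FM.pre {Y : Type*} [MeasurableSpace Y] {ι : Type*} [Finite ι] {f : Y → ι} (hf : FM f)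
    (s : Set ι) : MeasurableSet (f ⁻¹' s) := by
  rw [← Set.biUnion_preimage_singleton]
  exact MeasurableSet.biUnion s.toFinite.countable fun i _ => hf i

lemma FM.comp {Y : Type*} [MeasurableSpace Y] {ι κ : Type*} [Finite ι] {f : Y → ι} (hf : FM f)
    (φ : ι → κ) : FM (φ ∘ f) := fun j => by
  rw [Set.preimage_comp]; exact hf.pre _

lemma FM.prodMk {Y : Type*} [MeasurableSpace Y] {ι κ : Type*} {f : Y → ι} (hf : FM f)
    {g : Y → κ} (hg : FM g) : FM (fun x => (f x, g x)) := fun j => by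
  convert (hf j.1).inter (hg j.2) using 1
  ext x; simp [Prod.ext_iff]

lemma FM.pi {Y : Type*} [MeasurableSpace Y] {J κ : Type*} [Countable J] {f : J → Y → κ}
    (hf : ∀ j, FM (f j)) : FM (fun x j => f j x) := fun g => by
  convert MeasurableSet.iInter (fun j => hf j (g j)) using 1
  ext x; simp [funext_iff]

lemma FM.comp_meas {Y : Type*} [MeasurableSpace Y] {ι : Type*} {f : Y → ι} (hf : FM f)
    {S : Y → Y} (hS : Measurable S) : FM (f ∘ S) := fun j => by
  rw [Set.preimage_comp]; exact hS (hf j)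

lemma real_comp {Y : Type*} [MeasurableSpace Y] {ι κ : Type*} [Fintype ι] [DecidableEq κ]
    (μ : Measure Y) [IsFiniteMeasure μ] {f : Y → ι} (hf : FM f) (φ : ι → κ) (j : κ) :
    μ.real ((φ ∘ f) ⁻¹' {j}) = ∑ i with φ i = j, μ.real (f ⁻¹' {i}) := by
  rw [sum_measureReal_preimage_singleton _ (fun y _ => hf y)]
  congr 1
  ext x; simp

lemma Hf_sum_one {Y : Type*} [MeasurableSpace Y] {ι : Type*} [Fintype ι]
    (μ : Measure Y) [IsProbabilityMeasure μ] {f : Y → ι} (hf : FM f) :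
    ∑ i, μ.real (f ⁻¹' {i}) = 1 := by
  rw [sum_measureReal_preimage_singleton _ (fun y _ => hf y)]
  simp

lemma Hf_nonneg {Y : Type*} [MeasurableSpace Y] {ι : Type*} [Fintype ι]
    (μ : Measure Y) [IsProbabilityMeasure μ] (f : Y → ι) : 0 ≤ Hf μ f :=
  Finset.sum_nonneg fun _ _ => Real.negMulLog_nonneg measureReal_nonneg measureReal_le_one

lemma Hf_comp_le {Y : Type*} [MeasurableSpace Y] {ι κ : Type*} [Fintype ι] [Fintype κ]
    (μ : Measure Y) [IsFiniteMeasure μ] {f : Y → ι} (hf : FM f) (φ : ι → κ) :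
    Hf μ (φ ∘ f) ≤ Hf μ f := by
  classical
  unfold Hf
  rw [← Finset.sum_fiberwise Finset.univ φ]
  refine Finset.sum_le_sum fun j _ => ?_
  rw [real_comp μ hf]
  exact negMulLog_sum_le _ _ fun _ _ => measureReal_nonneg

lemma Hf_le {Y : Type*} [MeasurableSpace Y] [Nonempty Y] {ι κ : Type*} [Fintype ι] [Fintype κ]
    (μ : Measure Y) [IsFiniteMeasure μ] {f : Y → ι} (hf : FM f) {g : Y → κ}
    (h : ∀ x y, f x = f y → g x = g y) : Hf μ g ≤ Hf μ f := by
  obtain ⟨x0⟩ := ‹Nonempty Y›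
  have h' : Function.FactorsThrough g f := fun a b hab => h a b hab
  have : g = Function.extend f g (fun _ => g x0) ∘ f := by
    ext x; simp [h'.extend_apply]
  rw [this]
  exact Hf_comp_le μ hf _

lemma Hf_eq {Y : Type*} [MeasurableSpace Y] [Nonempty Y] {ι κ : Type*} [Fintype ι] [Fintype κ]
    (μ : Measure Y) [IsFiniteMeasure μ] {f : Y → ι} (hf : FM f) {g : Y → κ} (hg : FM g)
    (h : ∀ x y, f x = f y ↔ g x = g y) : Hf μ g = Hf μ f :=
  le_antisymm (Hf_le μ hf fun x y => (h x y).1) (Hf_le μ hg fun x y => (h x y).2)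

lemma Hf_ssa {Y : Type*} [MeasurableSpace Y] {ι κ ν : Type*} [Fintype ι] [Fintype κ] [Fintype ν]
    (μ : Measure Y) [IsFiniteMeasure μ] {f : Y → ι} (hf : FM f) {g : Y → κ} (hg : FM g)
    {h : Y → ν} (hh : FM h) :
    Hf μ (fun x => (h x, f x, g x)) + Hf μ h ≤
      Hf μ (fun x => (h x, f x)) + Hf μ (fun x => (h x, g x)) := by
  classical
  have hF : FM (fun x => (h x, f x, g x)) := hh.prodMk (hf.prodMk hg)
  set p : ν → ι → κ → ℝ := fun l i j => μ.real ((fun x => (h x, f x, g x)) ⁻¹' {(l, i, j)}) with hp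
  have m1 : ∀ l, μ.real (h ⁻¹' {l}) = ∑ i, ∑ j, p l i j := by
    intro l
    have := real_comp μ hF (fun t => t.1) l
    change μ.real (h ⁻¹' {l}) = _ at this
    rw [this, ← Finset.sum_product']
    symm
    refine Finset.sum_bij (fun t _ => (l, t.1, t.2)) ?_ ?_ ?_ ?_ <;> simp +contextual [hp]
  have m2 : ∀ l i, μ.real ((fun x => (h x, f x)) ⁻¹' {(l, i)}) = ∑ j, p l i j := by
    intro l i
    have := real_comp μ hF (fun t => (t.1, t.2.1)) (l, i)
    change μ.real ((fun x => (h x, f x)) ⁻¹' {(l, i)}) = _ at this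
    rw [this]
    symm
    refine Finset.sum_bij (fun t _ => (l, i, t)) ?_ ?_ ?_ ?_ <;> simp +contextual [hp]
  have m3 : ∀ l j, μ.real ((fun x => (h x, g x)) ⁻¹' {(l, j)}) = ∑ i, p l i j := by
    intro l i
    have := real_comp μ hF (fun t => (t.1, t.2.2)) (l, i)
    change μ.real ((fun x => (h x, g x)) ⁻¹' {(l, i)}) = _ at this
    rw [this]
    symm
    refine Finset.sum_bij (fun t _ => (l, t, i)) ?_ ?_ ?_ ?_ <;> simp +contextual [hp]
  unfold Hf
  simp only [Fintype.sum_prod_type, m1, m2, m3]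
  rw [← Finset.sum_add_distrib, ← Finset.sum_add_distrib]
  refine Finset.sum_le_sum fun l _ => ?_
  exact ssa_aux (p l) fun _ _ => measureReal_nonneg

lemma Hf_subadd {Y : Type*} [MeasurableSpace Y] [Nonempty Y] {ι κ : Type*} [Fintype ι] [Fintype κ]
    (μ : Measure Y) [IsProbabilityMeasure μ] {f : Y → ι} (hf : FM f) {g : Y → κ} (hg : FM g) :
    Hf μ (fun x => (f x, g x)) ≤ Hf μ f + Hf μ g := by
  have hh : FM (fun _ : Y => ()) := fun i => by simp
  have := Hf_ssa μ hf hg hh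
  have h0 := Hf_nonneg μ (fun _ : Y => ())
  have e1 := Hf_eq μ (hf.prodMk hg) (hh.prodMk (hf.prodMk hg)) (by simp)
  have e2 := Hf_eq μ hf (hh.prodMk hf) (by simp)
  have e3 := Hf_eq μ hg (hh.prodMk hg) (by simp)
  linarith

lemma Hf_le_log_card {Y : Type*} [MeasurableSpace Y] {ι : Type*} [Fintype ι] [Nonempty ι]
    (μ : Measure Y) [IsProbabilityMeasure μ] {f : Y → ι} (hf : FM f) :
    Hf μ f ≤ Real.log (Fintype.card ι) := by
  have hN : (0:ℝ) < Fintype.card ι := by exact_mod_cast Fintype.card_pos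
  have := Real.concaveOn_negMulLog.le_map_sum (t := (Finset.univ : Finset ι))
    (w := fun _ => (Fintype.card ι : ℝ)⁻¹) (p := fun i => μ.real (f ⁻¹' {i}))
    (fun _ _ => by positivity) (by simp [hN.ne']) (fun _ _ => measureReal_nonneg)
  simp only [smul_eq_mul, ← Finset.mul_sum, Hf_sum_one μ hf] at this
  change _ * Hf μ f ≤ _ at this
  simp only [Real.negMulLog, mul_one, Real.log_inv] at this
  rw [neg_mul_neg] at this
  exact le_of_mul_le_mul_left this (by positivity)

lemma Hf_map {Y : Type*} [MeasurableSpace Y] {ι : Type*} [Fintype ι]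
    {μ : Measure Y} {S : Y → Y} (hS : MeasurePreserving S μ μ) {f : Y → ι} (hf : FM f) :
    Hf μ (f ∘ S) = Hf μ f := by
  unfold Hf
  refine Finset.sum_congr rfl fun i _ => ?_
  rw [Set.preimage_comp, measureReal_def, hS.measure_preimage (hf i).nullMeasurableSet, measureReal_def]

lemma log_le_Hf {Y : Type*} [MeasurableSpace Y] {ι : Type*} [Fintype ι]
    (μ : Measure Y) [IsProbabilityMeasure μ] {f : Y → ι} (hf : FM f) (N : ℝ)
    (h : ∀ i, μ.real (f ⁻¹' {i}) ≤ 1 / N) : Real.log N ≤ Hf μ f := by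
  calc Real.log N = ∑ i, μ.real (f ⁻¹' {i}) * Real.log N := by
        rw [← Finset.sum_mul, Hf_sum_one μ hf, one_mul]
    _ ≤ Hf μ f := by
        refine Finset.sum_le_sum fun i _ => ?_
        rcases (measureReal_nonneg (μ := μ) (s := f ⁻¹' {i})).eq_or_lt with h0 | h0
        · simp [← h0]
        · have := Real.log_le_log h0 (h i)
          rw [one_div, Real.log_inv] at this
          unfold Real.negMulLog
          nlinarith

/-! ### Codes -/

/-- The `F`-name of a point. -/
def code {Y ι : Type*} (T : Y → Y) (f : Y → ι) (F : Finset ℕ) (x : Y) : {i // i ∈ F} → ι :=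
  fun i => f (T^[(i : ℕ)] x)

lemma code_eq_iff {Y ι : Type*} (T : Y → Y) (f : Y → ι) (F : Finset ℕ) (x y : Y) :
    code T f F x = code T f F y ↔ ∀ i ∈ F, f (T^[i] x) = f (T^[i] y) := by
  simp [code, funext_iff]

lemma FM_code {Y ι : Type*} [MeasurableSpace Y] {T : Y → Y} (hT : Measurable T) {f : Y → ι}
    (hf : FM f) (F : Finset ℕ) : FM (code T f F) :=
  FM.pi (f := fun (j : {i // i ∈ F}) x => f (T^[(j : ℕ)] x))
    fun j => hf.comp_meas (hT.iterate j)

section codes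
variable {Y ι : Type*} [MeasurableSpace Y] [Nonempty Y] [Fintype ι] {T : Y → Y}
  {f : Y → ι} (μ : Measure Y) [IsProbabilityMeasure μ]

lemma Hc_mono (hT : Measurable T) (hf : FM f) {F G : Finset ℕ} (h : F ⊆ G) :
    Hf μ (code T f F) ≤ Hf μ (code T f G) :=
  Hf_le μ (FM_code hT hf G) fun x y hxy => by
    rw [code_eq_iff] at hxy ⊢
    exact fun i hi => hxy i (h hi)

lemma Hc_union (hT : Measurable T) (hf : FM f) (F G : Finset ℕ) :
    Hf μ (code T f (F ∪ G)) ≤ Hf μ (code T f F) + Hf μ (code T f G) := by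
  refine le_trans (Hf_le μ ((FM_code hT hf F).prodMk (FM_code hT hf G)) fun x y hxy => ?_)
    (Hf_subadd μ (FM_code hT hf F) (FM_code hT hf G))
  simp only [Prod.mk.injEq, code_eq_iff, Finset.mem_union] at hxy ⊢
  rintro i (hi | hi)
  · exact hxy.1 i hi
  · exact hxy.2 i hi

lemma Hc_submod (hT : Measurable T) (hf : FM f) (s : ℕ) {F G : Finset ℕ} (hFG : F ⊆ G) :
    Hf μ (code T f (insert s G)) + Hf μ (code T f F) ≤
      Hf μ (code T f (insert s F)) + Hf μ (code T f G) := by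
  have a := FM_code hT hf F
  have b := FM_code hT hf G
  have c := FM_code hT hf {s}
  have := Hf_ssa μ c b a
  rw [Hf_eq μ (FM_code hT hf (insert s G)) (a.prodMk (c.prodMk b)),
    Hf_eq μ (FM_code hT hf (insert s F)) (a.prodMk c),
    Hf_eq μ b (a.prodMk b)] at this
  · exact this
  · intro x y
    simp only [Prod.mk.injEq, code_eq_iff]
    exact ⟨fun h => ⟨fun i hi => h i (hFG hi), h⟩, fun h => h.2⟩
  · intro x y
    simp only [Prod.mk.injEq, code_eq_iff, Finset.mem_singleton, Finset.mem_insert,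
      forall_eq_or_imp, forall_eq]
    tauto
  · intro x y
    simp only [Prod.mk.injEq, code_eq_iff, Finset.mem_singleton, Finset.mem_insert,
      forall_eq_or_imp, forall_eq]
    exact ⟨fun h => ⟨fun i hi => h.2 i (hFG hi), h⟩, fun h => h.2⟩

lemma Hc_shift (hT : Measurable T) (hf : FM f) (p n : ℕ) :
    Hf μ (code T f (Finset.Ico p (p + n))) = Hf μ (code T f (Finset.range n) ∘ T^[p]) := by
  refine Hf_eq μ ((FM_code hT hf _).comp_meas (hT.iterate p)) (FM_code hT hf _) fun x y => ?_
  simp only [Function.comp, code_eq_iff, ← Function.iterate_add_apply, Finset.mem_range,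
    Finset.mem_Ico]
  refine ⟨fun h i hi => ?_, fun h i hi => h _ (by omega)⟩
  have := h (i - p) (by omega)
  rwa [Nat.sub_add_cancel hi.1] at this

lemma Hc_shift_inv {μ} [IsProbabilityMeasure μ] (hT : MeasurePreserving T μ μ) (hf : FM f)
    (p n : ℕ) : Hf μ (code T f (Finset.Ico p (p + n))) = Hf μ (code T f (Finset.range n)) := by
  rw [Hc_shift μ hT.measurable hf]
  exact Hf_map (hT.iterate p) (FM_code hT.measurable hf _)

lemma Hc_empty (hT : Measurable T) (hf : FM f) : Hf μ (code T f ∅) = 0 := by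
  have h1 := Hf_nonneg μ (code T f ∅)
  have h2 := Hf_le_log_card μ (FM_code hT hf ∅)
  simp at h2
  linarith

lemma Hc_le_card {μ} [IsProbabilityMeasure μ] (hT : MeasurePreserving T μ μ) (hf : FM f)
    (F : Finset ℕ) : Hf μ (code T f F) ≤ F.card * Hf μ f := by
  induction F using Finset.induction_on with
  | empty => simp [Hc_empty μ hT.measurable hf]
  | insert a s ha ih =>
    rw [Finset.card_insert_of_notMem ha, Finset.insert_eq]
    have h1 := Hc_union μ hT.measurable hf {a} s
    have h2 : Hf μ (code T f {a}) = Hf μ f := by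
      rw [← Hf_map (hT.iterate a) hf]
      refine Hf_eq μ (hf.comp_meas (hT.measurable.iterate a)) (FM_code hT.measurable hf _) fun x y => ?_
      simp [code_eq_iff]
    push_cast
    linarith

lemma Hc_lower {μ} [IsProbabilityMeasure μ] (hT : MeasurePreserving T μ μ) (hf : FM f) (c : ℝ)
    (hc : ∀ q : ℕ, q * c ≤ Hf μ (code T f (Finset.range q))) (F : Finset ℕ) :
    F.card * c ≤ Hf μ (code T f F) := by
  set a : ℕ → ℝ := fun n => Hf μ (code T f (Finset.range n)) with ha
  have hIco : ∀ p n, Hf μ (code T f (Finset.Ico p (p + n))) = a n := Hc_shift_inv hT hf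
  have hins : ∀ p n, insert p (Finset.Ico (p + 1) (p + 1 + n)) = Finset.Ico p (p + (n + 1)) := by
    intro p n; ext x; simp only [Finset.mem_insert, Finset.mem_Ico]; omega
  have key : ∀ s n (F : Finset ℕ), F ⊆ Finset.Ico (s + 1) (s + 1 + n) →
      a (n + 1) - a n ≤ Hf μ (code T f (insert s F)) - Hf μ (code T f F) := by
    intro s n F hF
    have := Hc_submod μ hT.measurable hf s hF
    rw [hins, hIco, hIco] at this
    linarith
  have hd1 : ∀ n, a (n + 1 + 1) - a (n + 1) ≤ a (n + 1) - a n := by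
    intro n
    have := key 0 (n + 1) (Finset.Ico (0 + 1) (0 + 1 + n))
      (Finset.Ico_subset_Ico le_rfl (by omega))
    rwa [hins, hIco, hIco] at this
  have hd : Antitone fun n => a (n + 1) - a n := antitone_nat_of_succ_le hd1
  have hcd : ∀ n, c ≤ a (n + 1) - a n := by
    intro n
    by_contra! hlt
    have h1 : ∀ j : ℕ, a (n + j) ≤ a n + j * (a (n + 1) - a n) := by
      intro j
      induction j with
      | zero => simp
      | succ j ih =>
        have : a (n + j + 1) - a (n + j) ≤ a (n + 1) - a n := hd (Nat.le_add_right n j)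
        push_cast
        rw [← add_assoc]
        linarith
    obtain ⟨j, hj⟩ := exists_nat_gt ((a n - n * c) / (c - (a (n + 1) - a n)))
    rw [div_lt_iff₀ (by linarith)] at hj
    have h2 := h1 j
    have h3 := hc (n + j)
    change _ ≤ a (n + j) at h3
    push_cast at h3
    nlinarith
  induction F using Finset.induction_on_min with
  | empty => simp [Hc_empty μ hT.measurable hf]
  | insert s F hs ih =>
    have hns : s ∉ F := fun h => (hs s h).false
    rw [Finset.card_insert_of_notMem hns]
    have hsub : F ⊆ Finset.Ico (s + 1) (s + 1 + F.sup id) := by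
      intro x hx
      have h1 := hs x hx
      have h2 : x ≤ F.sup id := Finset.le_sup (f := id) hx
      simp only [Finset.mem_Ico]; omega
    have := key s _ F hsub
    have := hcd (F.sup id)
    push_cast
    linarith

end codes

/-! ### Fine partitions, separated sets -/

lemma null_frontier_biInter {Y J : Type*} [TopologicalSpace Y] [MeasurableSpace Y] (μ : Measure Y)
    (s : Finset J) (B : J → Set Y) (h : ∀ i ∈ s, μ (frontier (B i)) = 0) :
    μ (frontier (⋂ i ∈ s, B i)) = 0 := by
  classical
  induction s using Finset.induction_on with
  | empty => simp
  | insert a s ha ih =>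
    rw [Finset.set_biInter_insert]
    exact null_frontier_inter (h a (by simp)) (ih fun i hi => h i (by simp [hi]))

lemma exists_fine [MeasurableSpace X] [BorelSpace X] [CompactSpace X] (μ : Measure X) [SFinite μ]
    (ε : ℝ) (hε : 0 < ε) :
    ∃ (k : ℕ) (f : X → Fin k), (∀ x y, f x = f y → dist x y ≤ ε) ∧ FM f ∧
      ∀ j, μ (frontier (f ⁻¹' {j})) = 0 := by
  classical
  have h1 : ∀ x : X, ∃ r ∈ Set.Ioo 0 (ε / 2), μ (frontier (Metric.ball x r)) = 0 := by
    intro x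
    obtain ⟨r, hr, h⟩ := exists_null_frontier_thickening μ {x} (half_pos hε)
    exact ⟨r, hr, by rwa [Metric.thickening_singleton] at h⟩
  choose r hr hfr using h1
  obtain ⟨t, -, ht⟩ := (isCompact_univ (X := X)).elim_nhds_subcover (fun x => Metric.ball x (r x))
    (fun x _ => Metric.ball_mem_nhds x (hr x).1)
  let e := t.equivFin.symm
  let B : Fin t.card → Set X := fun i => Metric.ball (e i : X) (r (e i))
  have hne : ∀ x, (Finset.univ.filter (fun i => x ∈ B i)).Nonempty := by
    intro x
    have := ht (Set.mem_univ x)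
    simp only [Set.mem_iUnion] at this
    obtain ⟨y, hy, hxy⟩ := this
    refine ⟨t.equivFin ⟨y, hy⟩, ?_⟩
    simp [B, e]
    simpa using hxy
  let f : X → Fin t.card := fun x => (Finset.univ.filter (fun i => x ∈ B i)).min' (hne x)
  have hfB : ∀ x, x ∈ B (f x) := fun x => by
    have := Finset.min'_mem _ (hne x)
    simpa using this
  have hpre : ∀ j, f ⁻¹' {j} = B j ∩ ⋂ i ∈ Finset.univ.filter (fun i => i < j), (B i)ᶜ := by
    intro j
    ext x
    simp only [Set.mem_preimage, Set.mem_singleton_iff, Set.mem_inter_iff, Set.mem_iInter,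
      Finset.mem_filter, Finset.mem_univ, true_and, Set.mem_compl_iff]
    constructor
    · rintro rfl
      refine ⟨hfB x, fun i hi hx => ?_⟩
      exact absurd (Finset.min'_le (Finset.univ.filter (fun i => x ∈ B i)) i (by simpa using hx))
        (not_le.2 hi)
    · rintro ⟨h1, h2⟩
      refine le_antisymm (Finset.min'_le _ _ (by simpa using h1)) ?_
      by_contra! hlt
      exact h2 _ hlt (hfB x)
  refine ⟨t.card, f, fun x y hxy => ?_, fun j => ?_, fun j => ?_⟩
  · have a := hfB x
    have b := hfB y
    rw [← hxy] at b
    simp only [B, Metric.mem_ball] at a b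
    have := (hr (e (f x))).2
    have := dist_triangle_right x y (e (f x) : X)
    linarith
  · rw [hpre]
    refine Metric.isOpen_ball.measurableSet.inter ?_
    exact Finset.measurableSet_biInter _ fun i _ => Metric.isOpen_ball.measurableSet.compl
  · rw [hpre]
    refine null_frontier_inter (hfr _) (null_frontier_biInter μ _ _ fun i _ => ?_)
    rw [frontier_compl]
    exact hfr _

/-- `(F, ε)`-separated. -/
def IsSep (T : X → X) (F : Finset ℕ) (ε : ℝ) (E : Finset X) : Prop :=
  ∀ x ∈ E, ∀ y ∈ E, (∀ i ∈ F, dist (T^[i] x) (T^[i] y) ≤ ε) → x = y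

lemma exists_sep [CompactSpace X] (T : X → X) (F : Finset ℕ) (ε : ℝ) (hε : 0 < ε) :
    ∃ E : Finset X, IsSep T F ε E ∧ ∀ x : X, ∃ e ∈ E, ∀ i ∈ F, dist (T^[i] x) (T^[i] e) ≤ ε := by
  classical
  let _ : MeasurableSpace X := borel X
  have : BorelSpace X := ⟨rfl⟩
  obtain ⟨k, f, hf, -⟩ := exists_fine (0 : Measure X) ε hε
  let S : Set ℕ := {n | ∃ E : Finset X, IsSep T F ε E ∧ E.card = n}
  have hne : S.Nonempty := ⟨0, ∅, by simp [IsSep], rfl⟩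
  have hbdd : BddAbove S := by
    refine ⟨Fintype.card ({i // i ∈ F} → Fin k), ?_⟩
    rintro n ⟨E, hE, rfl⟩
    rw [← Finset.card_univ]
    refine Finset.card_le_card_of_injOn (code T f F) (fun _ _ => by simp) ?_
    intro x hx y hy hxy
    rw [code_eq_iff] at hxy
    exact hE x hx y hy fun i hi => hf _ _ (hxy i hi)
  obtain ⟨E, hE, hcard⟩ := Nat.sSup_mem hne hbdd
  refine ⟨E, hE, fun x => ?_⟩
  by_contra! hx
  have hxE : x ∉ E := fun h => by
    obtain ⟨i, -, h2⟩ := hx x h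
    simp at h2
    linarith
  have hsep : IsSep T F ε (insert x E) := by
    intro a ha b hb hab
    rw [Finset.mem_insert] at ha hb
    rcases ha with rfl | ha <;> rcases hb with rfl | hb
    · rfl
    · obtain ⟨i, hi, h2⟩ := hx b hb
      exact absurd (hab i hi) (not_le.2 h2)
    · obtain ⟨i, hi, h2⟩ := hx a ha
      rw [dist_comm] at h2
      exact absurd (hab i hi) (not_le.2 h2)
    · exact hE a ha b hb hab
  have := le_csSup hbdd (show (insert x E).card ∈ S from ⟨_, hsep, rfl⟩)
  rw [Finset.card_insert_of_notMem hxE] at this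
  omega

lemma exists_span [CompactSpace X] (T : X → X) (F : Finset ℕ) (ε : ℝ) (hε : 0 < ε) :
    ∃ E : Finset X, E.card = spaN T F ε ∧
      ∀ x : X, ∃ e ∈ E, ∀ i ∈ F, dist (T^[i] x) (T^[i] e) ≤ ε := by
  obtain ⟨E, -, h⟩ := exists_sep T F ε hε
  exact Nat.sInf_mem (s := {k : ℕ | ∃ E : Finset X, E.card = k ∧
    ∀ x : X, ∃ e ∈ E, ∀ i ∈ F, dist (T^[i] x) (T^[i] e) ≤ ε}) ⟨E.card, E, rfl, h⟩

lemma spaN_le (T : X → X) (F : Finset ℕ) (ε : ℝ) (E : Finset X)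
    (h : ∀ x : X, ∃ e ∈ E, ∀ i ∈ F, dist (T^[i] x) (T^[i] e) ≤ ε) : spaN T F ε ≤ E.card :=
  Nat.sInf_le ⟨E, rfl, h⟩

lemma spaN_pos [CompactSpace X] [Nonempty X] (T : X → X) (F : Finset ℕ) (ε : ℝ) (hε : 0 < ε) :
    0 < spaN T F ε := by
  obtain ⟨E, hE, h⟩ := exists_span T F ε hε
  obtain ⟨x⟩ := ‹Nonempty X›
  obtain ⟨e, he, -⟩ := h x
  rw [← hE]
  exact Finset.card_pos.2 ⟨e, he⟩

/-! ### The topological block bound -/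

open Pointwise in
lemma spaN_block [CompactSpace X] [Nonempty X] (T : X → X) (F : Finset ℕ) (ε : ℝ) (hε : 0 < ε)
    (m : ℕ) (hm : 0 < m) :
    Real.log (spaN T F (2 * ε)) ≤
      ((F + Finset.range m).card : ℝ) * (Real.log (spaN T (Finset.range m) ε) / m) := by
  classical
  set S := F + Finset.range m with hS
  obtain ⟨E, hE, hspan⟩ := exists_span T (Finset.range m) ε hε
  choose φ hφE hφ using hspan
  -- pick a good residue
  obtain ⟨r, hr, hrcard⟩ : ∃ r ∈ Finset.range m,
      (S.filter (fun p => p % m = r)).card * m ≤ S.card := by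
    by_contra! hcon
    have h1 : S.card = ∑ r ∈ Finset.range m, (S.filter (fun p => p % m = r)).card :=
      Finset.card_eq_sum_card_fiberwise fun p _ => by simpa using Nat.mod_lt p hm
    have h2 : ∑ r ∈ Finset.range m, S.card <
        ∑ r ∈ Finset.range m, (S.filter (fun p => p % m = r)).card * m :=
      Finset.sum_lt_sum_of_nonempty ⟨0, by simpa using hm⟩ hcon
    rw [← Finset.sum_mul, ← h1] at h2
    simp [mul_comm] at h2
  rw [Finset.mem_range] at hr
  set R := S.filter (fun p => p % m = r) with hR
  let Φ : X → (R → E) := fun x p => ⟨φ (T^[(p : ℕ) + 1 - m] x), hφE _⟩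
  -- representatives
  let x0 : X := Classical.arbitrary X
  let ψ : (R → E) → X := fun c => if h : ∃ x, Φ x = c then h.choose else x0
  have hψ : ∀ x, Φ (ψ (Φ x)) = Φ x := by
    intro x
    have h : ∃ y, Φ y = Φ x := ⟨x, rfl⟩
    simp only [ψ, dif_pos h]
    exact h.choose_spec
  have hle : spaN T F (2 * ε) ≤ E.card ^ R.card := by
    refine (spaN_le T F (2 * ε) (Finset.univ.image ψ) fun x => ?_).trans
      (Finset.card_image_le.trans (by simp))
    refine ⟨ψ (Φ x), by simp, fun i hi => ?_⟩
    -- p with i ≤ p < i + m, p % m = r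
    obtain ⟨j, hj, hjr⟩ : ∃ j < m, (i + j) % m = r := by
      refine ⟨(r + (m - i % m)) % m, Nat.mod_lt _ hm, ?_⟩
      have h1 := Nat.mod_lt i hm
      rw [Nat.add_mod_mod, ← Nat.mod_add_mod,
        show i % m + (r + (m - i % m)) = r + m by omega, Nat.add_mod_right, Nat.mod_eq_of_lt hr]
    have hp : i + j ∈ R := by
      rw [hR, Finset.mem_filter]
      exact ⟨Finset.add_mem_add hi (by simpa using hj), hjr⟩
    set s := i + j + 1 - m with hs
    have hsi : s ≤ i ∧ i - s < m := by omega
    have hΦ := congrFun (hψ x) ⟨i + j, hp⟩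
    simp only [Φ, Subtype.mk.injEq] at hΦ
    have a := hφ (T^[s] x) (i - s) (by simpa using hsi.2)
    have b := hφ (T^[s] (ψ (Φ x))) (i - s) (by simpa using hsi.2)
    rw [hΦ] at b
    rw [← Function.iterate_add_apply, Nat.sub_add_cancel hsi.1] at a b
    have := dist_triangle_right (T^[i] x) (T^[i] (ψ (Φ x))) (T^[i - s] (φ (T^[s] x)))
    linarith
  have hpos := spaN_pos T F (2 * ε) (by linarith)
  have hpos2 := spaN_pos T (Finset.range m) ε hε
  have h3 : Real.log (spaN T F (2 * ε)) ≤ R.card * Real.log (spaN T (Finset.range m) ε) := by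
    rw [← Real.log_pow, ← hE]
    exact Real.log_le_log (by exact_mod_cast hpos) (by exact_mod_cast hle)
  refine h3.trans ?_
  have hm' : (0:ℝ) < m := by exact_mod_cast hm
  have h4 : (R.card : ℝ) * m ≤ S.card := by exact_mod_cast hrcard
  have h5 : 0 ≤ Real.log (spaN T (Finset.range m) ε) / m :=
    div_nonneg (Real.log_natCast_nonneg _) hm'.le
  calc (R.card : ℝ) * Real.log (spaN T (Finset.range m) ε)
      = (R.card * m) * (Real.log (spaN T (Finset.range m) ε) / m) := by field_simp
    _ ≤ _ := mul_le_mul_of_nonneg_right h4 h5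

/-! ### Measure entropy is at most topological entropy -/

lemma exists_FM_choice {Y : Type*} [MeasurableSpace Y] {k : ℕ} (B : Fin k → Set Y)
    (hB : ∀ i, MeasurableSet (B i)) (hc : ∀ x, ∃ i, x ∈ B i) :
    ∃ f : Y → Fin k, FM f ∧ ∀ x, x ∈ B (f x) := by
  classical
  have hne : ∀ x, (Finset.univ.filter (fun i => x ∈ B i)).Nonempty := by
    intro x
    obtain ⟨i, hi⟩ := hc x
    exact ⟨i, by simpa using hi⟩
  let f : Y → Fin k := fun x => (Finset.univ.filter (fun i => x ∈ B i)).min' (hne x)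
  have hfB : ∀ x, x ∈ B (f x) := fun x => by
    have := Finset.min'_mem _ (hne x)
    simpa using this
  have hpre : ∀ j, f ⁻¹' {j} = B j ∩ ⋂ i ∈ Finset.univ.filter (fun i => i < j), (B i)ᶜ := by
    intro j
    ext x
    simp only [Set.mem_preimage, Set.mem_singleton_iff, Set.mem_inter_iff, Set.mem_iInter,
      Finset.mem_filter, Finset.mem_univ, true_and, Set.mem_compl_iff]
    constructor
    · rintro rfl
      refine ⟨hfB x, fun i hi hx => ?_⟩
      exact absurd (Finset.min'_le (Finset.univ.filter (fun i => x ∈ B i)) i (by simpa using hx))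
        (not_le.2 hi)
    · rintro ⟨h1, h2⟩
      refine le_antisymm (Finset.min'_le _ _ (by simpa using h1)) ?_
      by_contra! hlt
      exact h2 _ hlt (hfB x)
  refine ⟨f, fun j => ?_, hfB⟩
  rw [hpre]
  exact (hB j).inter (Finset.measurableSet_biInter _ fun i _ => (hB i).compl)

lemma goodwyn_F [MeasurableSpace X] [BorelSpace X] [CompactSpace X] [Nonempty X]
    {T : X → X} (hTc : Continuous T) {μ : Measure X} [IsProbabilityMeasure μ]
    (hT : MeasurePreserving T μ μ) {k : ℕ} {f : X → Fin k} (hf : FM f) (η : ℝ) (hη : 0 < η) :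
    ∃ δ > 0, ∀ F : Finset ℕ,
      Hf μ (code T f F) ≤ Real.log (spaN T F δ) + F.card * η := by
  classical
  have hη' : 0 < η / (k + 1) := by positivity
  -- continuity of negMulLog at 0 and 1
  obtain ⟨τ, hτ, h0, h1⟩ : ∃ τ > 0, (∀ t : ℝ, |t| < τ → Real.negMulLog t ≤ η / (k + 1)) ∧
      ∀ t : ℝ, |t - 1| < τ → Real.negMulLog t ≤ η / (k + 1) := by
    have c0 := Real.continuous_negMulLog.continuousAt (x := 0)
    have c1 := Real.continuous_negMulLog.continuousAt (x := 1)
    obtain ⟨a, ha, ha'⟩ := Metric.continuousAt_iff.1 c0 _ hη'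
    obtain ⟨b, hb, hb'⟩ := Metric.continuousAt_iff.1 c1 _ hη'
    simp only [Real.dist_eq, Real.negMulLog_zero, Real.negMulLog_one, sub_zero] at ha' hb'
    exact ⟨min a b, lt_min ha hb,
      fun t ht => ((le_abs_self _).trans_lt (ha' (ht.trans_le (min_le_left _ _)))).le,
      fun t ht => ((le_abs_self _).trans_lt (hb' (ht.trans_le (min_le_right _ _)))).le⟩
  have hτ' : 0 < τ / (k + 1) := by positivity
  have hK : ∀ j, ∃ K ⊆ f ⁻¹' {j}, IsClosed K ∧ μ (f ⁻¹' {j} \ K) < ENNReal.ofReal (τ / (k + 1)) :=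
    fun j => (hf j).exists_isClosed_sdiff_lt (measure_ne_top _ _) (by simpa using hτ')
  choose K hKf hKc hKm using hK
  have hdisj : ∀ i j, i ≠ j → Disjoint (K i) (K j) := fun i j hij =>
    Disjoint.mono (hKf i) (hKf j) (Disjoint.preimage f (by simpa using hij))
  have hsep : ∀ p : Fin k × Fin k, ∃ δ > 0, p.1 ≠ p.2 →
      Disjoint (Metric.thickening δ (K p.1)) (Metric.thickening δ (K p.2)) := by
    intro p
    by_cases hp : p.1 = p.2
    · exact ⟨1, one_pos, fun h => absurd hp h⟩
    · obtain ⟨δ, hδ, h⟩ := (hdisj _ _ hp).exists_thickenings (hKc p.1).isCompact (hKc p.2)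
      exact ⟨δ, hδ, fun _ => h⟩
  choose d hd0 hd using hsep
  obtain ⟨δ, hδ, hδ0⟩ : ∃ δ : ℝ, (∀ p, δ < d p) ∧ 0 < δ := by
    have h : ∀ᶠ δ in nhdsWithin (0:ℝ) (Set.Ioi 0), ∀ p, δ < d p := by
      rw [eventually_all]
      exact fun p => mem_nhdsWithin_of_mem_nhds (Iio_mem_nhds (hd0 p))
    exact (h.and self_mem_nhdsWithin).exists
  -- the partition of small entropy
  let ζ : X → Option (Fin k) := fun x => if x ∈ K (f x) then none else some (f x)
  have hζs : ∀ j, ζ ⁻¹' {some j} = f ⁻¹' {j} \ K j := by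
    intro j; ext x
    by_cases hx : x ∈ K (f x)
    · simp only [ζ, Set.mem_preimage, hx, if_true, Set.mem_singleton_iff, Set.mem_sdiff]
      constructor
      · intro h; cases h
      · rintro ⟨rfl, h⟩; exact absurd hx h
    · simp only [ζ, Set.mem_preimage, hx, if_false, Set.mem_singleton_iff, Set.mem_sdiff,
        Option.some.injEq]
      constructor
      · rintro rfl; exact ⟨rfl, hx⟩
      · exact fun h => h.1
  have hζn : ζ ⁻¹' {none} = ⋃ j, K j := by
    ext x
    simp only [ζ, Set.mem_preimage, Set.mem_singleton_iff, Set.mem_iUnion]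
    constructor
    · intro h
      by_contra! hcon
      simp [hcon (f x)] at h
    · rintro ⟨j, hj⟩
      have : f x = j := hKf j hj
      simp [this, hj]
  have hζ : FM ζ := by
    rintro (_ | j)
    · rw [hζn]; exact MeasurableSet.iUnion fun j => (hKc j).measurableSet
    · rw [hζs]; exact (hf j).diff (hKc j).measurableSet
  have hζm : ∀ j, μ.real (ζ ⁻¹' {some j}) < τ / (k + 1) := by
    intro j
    rw [hζs, measureReal_def]
    exact (ENNReal.lt_ofReal_iff_toReal_lt (measure_ne_top _ _)).1 (hKm j)
  have hHζ : Hf μ ζ ≤ η := by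
    have hs := Hf_sum_one μ hζ
    rw [Fintype.sum_option] at hs
    have hb : ∑ j, μ.real (ζ ⁻¹' {some j}) ≤ k * (τ / (k + 1)) := by
      refine (Finset.sum_le_sum fun j _ => (hζm j).le).trans ?_
      simp
    have hb0 : 0 ≤ ∑ j, μ.real (ζ ⁻¹' {some j}) := Finset.sum_nonneg fun _ _ => measureReal_nonneg
    have hkτ : k * (τ / (k + 1)) < τ := by
      rw [mul_div_assoc', div_lt_iff₀ (by positivity)]; nlinarith
    have hττ : τ / (k + 1) ≤ τ := by
      apply div_le_self hτ.le; linarith [(Nat.cast_nonneg k : (0:ℝ) ≤ k)]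
    unfold Hf
    rw [Fintype.sum_option]
    have e1 := h1 (μ.real (ζ ⁻¹' {none})) (by rw [abs_lt]; constructor <;> linarith)
    have e2 : ∑ j, Real.negMulLog (μ.real (ζ ⁻¹' {some j})) ≤ k * (η / (k + 1)) := by
      refine (Finset.sum_le_sum fun j _ => h0 _ ?_).trans (by simp)
      rw [abs_of_nonneg measureReal_nonneg]
      exact (hζm j).trans_le hττ
    have e3 : η / (k + 1) + k * (η / (k + 1)) = η := by field_simp; ring
    linarith
  refine ⟨δ, hδ0, fun F => ?_⟩
  obtain ⟨E, hE, hspan⟩ := exists_span T F δ hδ0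
  let e := E.equivFin.symm
  obtain ⟨φ, hφ, hφE⟩ := exists_FM_choice
    (fun j : Fin E.card => {x : X | ∀ i ∈ F, dist (T^[i] x) (T^[i] (e j : X)) ≤ δ})
    (fun j => by
      have : {x : X | ∀ i ∈ F, dist (T^[i] x) (T^[i] (e j : X)) ≤ δ} =
          ⋂ i ∈ F, {x : X | dist (T^[i] x) (T^[i] (e j : X)) ≤ δ} := by
        ext x; simp
      rw [this]
      exact Finset.measurableSet_biInter _ fun i _ =>
        (isClosed_le ((hTc.iterate i).dist continuous_const) continuous_const).measurableSet)
    (fun x => by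
      obtain ⟨y, hy, h⟩ := hspan x
      exact ⟨E.equivFin ⟨y, hy⟩, by simpa [e] using h⟩)
  have hcζ := FM_code hT.measurable hζ F
  have step1 : Hf μ (code T f F) ≤ Hf μ (fun x => (φ x, code T ζ F x)) := by
    refine Hf_le μ (hφ.prodMk hcζ) fun x y hxy => ?_
    simp only [Prod.mk.injEq, code_eq_iff] at hxy ⊢
    obtain ⟨hxy, hz⟩ := hxy
    intro i hi
    have hzi := hz i hi
    by_cases hx : T^[i] x ∈ K (f (T^[i] x)) <;> by_cases hy : T^[i] y ∈ K (f (T^[i] y))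
    · by_contra hne
      have dx := hφE x i hi
      have dy := hφE y i hi
      rw [← hxy] at dy
      rw [dist_comm] at dx dy
      have := hd (f (T^[i] x), f (T^[i] y)) hne
      refine Set.disjoint_left.1 this
        (Metric.mem_thickening_iff.2 ⟨_, hx, dx.trans_lt (hδ _)⟩)
        (Metric.mem_thickening_iff.2 ⟨_, hy, dy.trans_lt (hδ _)⟩)
    · simp [ζ, hx, hy] at hzi
    · simp [ζ, hx, hy] at hzi
    · simpa [ζ, hx, hy] using hzi
  have step2 := Hf_subadd μ hφ hcζ
  have hne : Nonempty (Fin E.card) := ⟨φ (Classical.arbitrary X)⟩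
  have step3 := Hf_le_log_card μ hφ
  rw [Fintype.card_fin] at step3
  have step4 := Hc_le_card hT hζ F
  have step5 : (F.card : ℝ) * Hf μ ζ ≤ F.card * η := by gcongr
  rw [← hE]
  linarith

lemma part_fun {Y : Type*} [MeasurableSpace Y] {k : ℕ} {ξ : Fin k → Set Y}
    (h : IsMeasPartition ξ) : ∃ f : Y → Fin k, FM f ∧ ∀ j, f ⁻¹' {j} = ξ j := by
  have hx : ∀ x, ∃ j, x ∈ ξ j := fun x => by
    have := Set.mem_univ x
    rw [← h.2.2] at this
    simpa using this
  choose f hf using hx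
  have : ∀ j, f ⁻¹' {j} = ξ j := by
    intro j; ext x
    simp only [Set.mem_preimage, Set.mem_singleton_iff]
    constructor
    · rintro rfl; exact hf x
    · intro hj
      by_contra hne
      exact Set.disjoint_left.1 (h.2.1 hne) (hf x) hj
  exact ⟨f, fun j => by rw [this]; exact h.1 j, this⟩

lemma Hjoin_eq {Y : Type*} [MeasurableSpace Y] (μ : Measure Y) (T : Y → Y) {k : ℕ}
    {ξ : Fin k → Set Y} {f : Y → Fin k} (h : ∀ j, f ⁻¹' {j} = ξ j) (F : Finset ℕ) :
    Hjoin μ T F ξ = Hf μ (code T f F) := by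
  unfold Hjoin Hf
  refine Finset.sum_congr rfl fun g _ => ?_
  rw [measureReal_def]
  congr 3
  ext x
  simp [code, funext_iff, ← h]

lemma goodwyn [MeasurableSpace X] [BorelSpace X] [CompactSpace X] [Nonempty X]
    {T : X → X} (hTc : Continuous T) {μ : Measure X} [IsProbabilityMeasure μ]
    (hT : MeasurePreserving T μ μ) (A : ℕ → ℕ) : seqEntMeas μ T A ≤ seqEntTop T A := by
  refine iSup_le fun k => iSup_le fun ξ => iSup_le fun hξ => ?_
  obtain ⟨f, hf, hfξ⟩ := part_fun hξ
  simp only [Hjoin_eq μ T hfξ]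
  rw [← EReal.le_of_forall_lt_iff_le]
  intro z hz
  obtain ⟨z', hz1, hz2⟩ := EReal.lt_iff_exists_real_btwn.1 hz
  have hzz : z' < z := by exact_mod_cast hz2
  obtain ⟨δ, hδ, hF⟩ := goodwyn_F hTc hT hf (z - z') (by linarith)
  have hlim : limsup (fun n : ℕ =>
        ((Real.log (spaN T ((Finset.Icc 1 n).image A) δ) / n : ℝ) : EReal)) atTop < z' :=
    lt_of_le_of_lt (le_iSup₂ (f := fun (ε : ℝ) (_ : 0 < ε) => limsup (fun n : ℕ =>
        ((Real.log (spaN T ((Finset.Icc 1 n).image A) ε) / n : ℝ) : EReal)) atTop) δ hδ) hz1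
  have hev := eventually_lt_of_limsup_lt hlim
  refine limsup_le_of_le (h := ?_)
  filter_upwards [hev, eventually_gt_atTop 0] with n hn hn0
  rw [EReal.coe_lt_coe_iff] at hn
  rw [EReal.coe_le_coe_iff]
  have hn' : (0:ℝ) < n := by exact_mod_cast hn0
  rw [div_lt_iff₀ hn'] at hn
  rw [div_le_iff₀ hn']
  have h1 := hF ((Finset.Icc 1 n).image A)
  have h2 : (((Finset.Icc 1 n).image A).card : ℝ) ≤ n := by
    have := Finset.card_image_le (s := Finset.Icc 1 n) (f := A)
    simp at this
    exact_mod_cast this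
  have h3 := mul_le_mul_of_nonneg_right h2 (sub_nonneg.2 hzz.le)
  linarith

/-! ### Lower bound for the measure entropy -/

lemma seqEntMeas_ge {Y : Type*} [MeasurableSpace Y] [Nonempty Y] {T : Y → Y} (hT : Measurable T)
    (μ : Measure Y) [IsProbabilityMeasure μ] (A : ℕ → ℕ) {ι : Type*} [Fintype ι] {f : Y → ι}
    (hf : FM f) :
    limsup (fun n : ℕ => ((Hf μ (code T f ((Finset.Icc 1 n).image A)) / n : ℝ) : EReal)) atTop
      ≤ seqEntMeas μ T A := by
  let e := Fintype.equivFin ι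
  let g : Y → Fin (Fintype.card ι) := e ∘ f
  have hg : FM g := hf.comp e
  have hpart : IsMeasPartition (fun j => g ⁻¹' {j}) := by
    refine ⟨hg, fun i j hij => Disjoint.preimage g (by simpa using hij), ?_⟩
    ext x; simp
  have heq : ∀ F, Hf μ (code T f F) = Hjoin μ T F (fun j => g ⁻¹' {j}) := by
    intro F
    rw [Hjoin_eq μ T (f := g) (fun j => rfl)]
    refine Hf_eq μ (FM_code hT hg F) (FM_code hT hf F) fun x y => ?_
    simp [code_eq_iff, g]
  simp only [heq]
  exact le_iSup_of_le _ (le_iSup_of_le _ (le_iSup_of_le hpart le_rfl))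

open Pointwise in
lemma meas_lower {Y : Type*} [MeasurableSpace Y] [Nonempty Y] {T : Y → Y} (hT : Measurable T)
    (μ : Measure Y) [IsProbabilityMeasure μ] (A : ℕ → ℕ) {ι : Type*} [Fintype ι] {f : Y → ι}
    (hf : FM f) (c : ℝ) (hc : ∀ F : Finset ℕ, F.card * c ≤ Hf μ (code T f F)) (m : ℕ) :
    limsup (fun n : ℕ => ((((((Finset.Icc 1 n).image A + Finset.range m).card : ℝ) / n) * c : ℝ) :
      EReal)) atTop ≤ seqEntMeas μ T A := by
  refine le_trans ?_ (seqEntMeas_ge hT μ A (FM_code hT hf (Finset.range m)))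
  refine limsup_le_limsup (Eventually.of_forall fun n => ?_)
  rw [EReal.coe_le_coe_iff, div_mul_eq_mul_div]
  refine div_le_div_of_nonneg_right ?_ (Nat.cast_nonneg n)
  refine (hc _).trans ?_
  refine Hf_le μ (FM_code hT (FM_code hT hf _) _) fun x y hxy => ?_
  simp only [code_eq_iff, ← Function.iterate_add_apply] at hxy ⊢
  intro i hi
  obtain ⟨a, ha, b, hb, rfl⟩ := Finset.mem_add.1 hi
  rw [add_comm]
  exact hxy a ha b hb

/-! ### The Misiurewicz construction -/

/-- Average of a finite family of measures. -/
noncomputable def avgM {Y J : Type*} [MeasurableSpace Y] (s : Finset J) (ν : J → Measure Y) :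
    Measure Y := (s.card : ENNReal)⁻¹ • ∑ j ∈ s, ν j

lemma avgM_prob {Y J : Type*} [MeasurableSpace Y] (s : Finset J) (hs : s.Nonempty)
    (ν : J → Measure Y) (h : ∀ j, IsProbabilityMeasure (ν j)) : IsProbabilityMeasure (avgM s ν) := by
  constructor
  have : (s.card : ENNReal) ≠ 0 := by simpa using hs.ne_empty
  simp [avgM, ENNReal.inv_mul_cancel this]

lemma avgM_real {Y J : Type*} [MeasurableSpace Y] (s : Finset J)
    (ν : J → Measure Y) (h : ∀ j, IsProbabilityMeasure (ν j)) (S : Set Y) :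
    (avgM s ν).real S = (s.card : ℝ)⁻¹ * ∑ j ∈ s, (ν j).real S := by
  simp only [avgM, measureReal_def, Measure.smul_apply, Measure.finsetSum_apply, smul_eq_mul,
    ENNReal.toReal_mul, ENNReal.toReal_inv, ENNReal.toReal_natCast]
  rw [ENNReal.toReal_sum fun j _ => measure_ne_top _ _]

lemma avgM_integral {Y J : Type*} [MeasurableSpace Y] (s : Finset J)
    (ν : J → Measure Y) (f : Y → ℝ) (hf : ∀ j, Integrable f (ν j)) :
    ∫ x, f x ∂(avgM s ν) = (s.card : ℝ)⁻¹ * ∑ j ∈ s, ∫ x, f x ∂(ν j) := by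
  simp only [avgM]
  rw [integral_smul_measure, integral_finsetSum_measure fun j _ => hf j]
  simp

lemma avgM_Hf {Y J : Type*} [MeasurableSpace Y] (s : Finset J) (hs : s.Nonempty)
    (ν : J → Measure Y) (h : ∀ j, IsProbabilityMeasure (ν j)) {ι : Type*} [Fintype ι] (f : Y → ι) :
    ∑ j ∈ s, Hf (ν j) f ≤ s.card * Hf (avgM s ν) f := by
  have hN : (0:ℝ) < s.card := by exact_mod_cast hs.card_pos
  unfold Hf
  rw [Finset.sum_comm, Finset.mul_sum]
  refine Finset.sum_le_sum fun i _ => ?_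
  have := Real.concaveOn_negMulLog.le_map_sum (t := s)
    (w := fun _ => (s.card : ℝ)⁻¹) (p := fun j => (ν j).real (f ⁻¹' {i}))
    (fun _ _ => by positivity) (by simp [hN.ne']) (fun _ _ => measureReal_nonneg)
  simp only [smul_eq_mul, ← Finset.mul_sum] at this
  rw [avgM_real s ν h]
  rwa [inv_mul_le_iff₀ hN] at this

lemma mis_n [MeasurableSpace X] [BorelSpace X] [CompactSpace X] [Nonempty X]
    {T : X → X} (hTc : Continuous T) (ε : ℝ) (hε : 0 < ε) (n : ℕ) (hn : 0 < n) :
    ∃ ν : ProbabilityMeasure X,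
      (∀ f : BoundedContinuousFunction X ℝ,
        |(∫ x, f (T x) ∂(ν : Measure X)) - ∫ x, f x ∂(ν : Measure X)| ≤ 2 * ‖f‖ / n) ∧
      ∀ (k : ℕ) (f : X → Fin k), FM f → (∀ x y, f x = f y → dist x y ≤ ε) → ∀ q : ℕ,
        q * Real.log (spaN T (Finset.range n) ε) ≤
          n * Hf (ν : Measure X) (code T f (Finset.range q)) +
            q * Real.log (Fintype.card ({i // i ∈ Finset.range q} → Fin k)) := by
  classical
  have hTm : Measurable T := hTc.measurable
  obtain ⟨E, hsep, hspan⟩ := exists_sep T (Finset.range n) ε hε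
  have hEne : E.Nonempty := by
    obtain ⟨e, he, -⟩ := hspan (Classical.arbitrary X)
    exact ⟨e, he⟩
  have hE0 : (0:ℝ) < E.card := by exact_mod_cast hEne.card_pos
  have hn' : (0:ℝ) < n := by exact_mod_cast hn
  let σ : Measure X := avgM E (fun e => Measure.dirac e)
  have hσ : IsProbabilityMeasure σ := avgM_prob E hEne _ fun _ => inferInstance
  have hσp : ∀ p : ℕ, IsProbabilityMeasure (σ.map T^[p]) := fun p =>
    Measure.isProbabilityMeasure_map (hTm.iterate p).aemeasurable
  have hrne : (Finset.range n).Nonempty := ⟨0, by simpa using hn⟩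
  let ν : Measure X := avgM (Finset.range n) (fun p => σ.map T^[p])
  have hν : IsProbabilityMeasure ν := avgM_prob _ hrne _ hσp
  refine ⟨⟨ν, hν⟩, fun f => ?_, fun k f hf hfine q => ?_⟩
  · change |(∫ x, f (T x) ∂ν) - ∫ x, f x ∂ν| ≤ _
    have hIntg : ∀ (g : C(X, ℝ)) (ρ : Measure X) [IsProbabilityMeasure ρ], Integrable g ρ :=
      fun g ρ _ => (BoundedContinuousFunction.mkOfCompact g).integrable ρ
    let f' : C(X, ℝ) := f.toContinuousMap
    let u : ℕ → ℝ := fun p => ∫ x, f (T^[p] x) ∂σ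
    have e1 : ∫ x, f x ∂ν = (n : ℝ)⁻¹ * ∑ p ∈ Finset.range n, u p := by
      rw [show (∫ x, f x ∂ν) = _ from avgM_integral (Finset.range n) (fun p => σ.map T^[p])
        (fun x => f x) fun p => hIntg f' _, Finset.card_range]
      congr 1
      refine Finset.sum_congr rfl fun p _ => ?_
      exact integral_map (hTm.iterate p).aemeasurable f.continuous.aestronglyMeasurable
    have e2 : ∫ x, f (T x) ∂ν = (n : ℝ)⁻¹ * ∑ p ∈ Finset.range n, u (p + 1) := by
      rw [show (∫ x, f (T x) ∂ν) = _ from avgM_integral (Finset.range n) (fun p => σ.map T^[p])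
        (fun x => f (T x)) fun p => hIntg (f'.comp ⟨T, hTc⟩) _, Finset.card_range]
      congr 1
      refine Finset.sum_congr rfl fun p _ => ?_
      rw [integral_map (f := fun x => f (T x)) (hTm.iterate p).aemeasurable
        (f.continuous.comp hTc).aestronglyMeasurable]
      simp only [u, Function.iterate_succ_apply']
    have hu : ∀ p, |u p| ≤ ‖f‖ := by
      intro p
      have := norm_integral_le_of_norm_le_const (μ := σ) (f := fun x => f (T^[p] x)) (C := ‖f‖)
        (Eventually.of_forall fun x => f.norm_coe_le_norm _)
      simpa using this
    rw [e1, e2, ← mul_sub, ← Finset.sum_sub_distrib, Finset.sum_range_sub, abs_mul,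
      abs_of_pos (inv_pos.2 hn'), inv_mul_eq_div]
    refine div_le_div_of_nonneg_right ?_ hn'.le
    have := abs_sub (u n) (u 0)
    linarith [hu n, hu 0]
  · change _ ≤ n * Hf ν (code T f (Finset.range q)) + _
    have hkne : Nonempty (Fin k) := ⟨f (Classical.arbitrary X)⟩
    let a : ℕ → ℝ := fun p => Hf σ (code T f (Finset.range p))
    have ha_mono : Monotone a := fun i j hij =>
      Hc_mono σ hTm hf (Finset.range_subset_range.2 hij)
    let b : ℕ → ℝ := fun p => Hf (σ.map T^[p]) (code T f (Finset.range q))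
    have hab : ∀ p, a (p + q) ≤ a p + b p := by
      intro p
      have h1 := Hc_union σ hTm hf (Finset.range p) (Finset.Ico p (p + q))
      have h2 : Finset.range p ∪ Finset.Ico p (p + q) = Finset.range (p + q) := by
        ext x; simp only [Finset.mem_union, Finset.mem_range, Finset.mem_Ico]; omega
      rw [h2, Hc_shift σ hTm hf] at h1
      have h3 : b p = Hf σ (code T f (Finset.range q) ∘ T^[p]) := by
        simp only [b]
        unfold Hf
        refine Finset.sum_congr rfl fun i _ => ?_
        rw [map_measureReal_apply (hTm.iterate p) (FM_code hTm hf _ i)]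
        rfl
      rw [h3]
      exact h1
    have hlog : Real.log E.card ≤ a n := by
      refine log_le_Hf σ (FM_code hTm hf _) _ fun i => ?_
      rw [avgM_real _ _ fun _ => inferInstance, one_div]
      refine mul_le_of_le_one_right (by positivity) ?_
      have hd : ∀ e : X, (Measure.dirac e).real (code T f (Finset.range n) ⁻¹' {i}) =
          if code T f (Finset.range n) e = i then 1 else 0 := by
        intro e
        rw [measureReal_def, Measure.dirac_apply' _ (FM_code hTm hf _ i)]
        by_cases h : code T f (Finset.range n) e = i <;> simp [h]
      simp only [hd, Finset.sum_boole]
      have : (E.filter fun e => code T f (Finset.range n) e = i).card ≤ 1 := by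
        rw [Finset.card_le_one]
        intro x hx y hy
        rw [Finset.mem_filter] at hx hy
        refine hsep x hx.1 y hy.1 fun j hj => hfine _ _ ?_
        have := hx.2.trans hy.2.symm
        rw [code_eq_iff] at this
        exact this j hj
      exact_mod_cast this
    have hspa : Real.log (spaN T (Finset.range n) ε) ≤ Real.log E.card :=
      Real.log_le_log (by exact_mod_cast spaN_pos T _ ε hε)
        (by exact_mod_cast spaN_le T _ ε E hspan)
    have hsum : ∑ p ∈ Finset.range n, a (p + q) ≤
        ∑ p ∈ Finset.range n, a p + ∑ p ∈ Finset.range n, b p := by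
      rw [← Finset.sum_add_distrib]
      exact Finset.sum_le_sum fun p _ => hab p
    have hs1 : ∑ p ∈ Finset.range n, a (p + q) + ∑ p ∈ Finset.range q, a p =
        ∑ p ∈ Finset.range n, a p + ∑ p ∈ Finset.range q, a (n + p) := by
      rw [← Finset.sum_range_add, add_comm n q, Finset.sum_range_add, add_comm]
      simp only [add_comm]
    have hs2 : (q : ℝ) * a n ≤ ∑ p ∈ Finset.range q, a (n + p) := by
      have := Finset.card_nsmul_le_sum (Finset.range q) (fun p => a (n + p)) (a n)
        (fun p _ => ha_mono (Nat.le_add_right n p))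
      simpa using this
    have hs3 : ∑ p ∈ Finset.range q, a p ≤ q * a q := by
      have := Finset.sum_le_card_nsmul (Finset.range q) a (a q)
        (fun p hp => ha_mono (Finset.mem_range.1 hp).le)
      simpa using this
    have hs4 : ∑ p ∈ Finset.range n, b p ≤ n * Hf ν (code T f (Finset.range q)) := by
      have := avgM_Hf (Finset.range n) hrne (fun p => σ.map T^[p]) hσp (code T f (Finset.range q))
      rwa [Finset.card_range] at this
    have hs5 : a q ≤ Real.log (Fintype.card ({i // i ∈ Finset.range q} → Fin k)) :=
      Hf_le_log_card σ (FM_code hTm hf _)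
    have hs6 := mul_le_mul_of_nonneg_left hs5 (Nat.cast_nonneg (α := ℝ) q)
    have hs7 := mul_le_mul_of_nonneg_left (hspa.trans hlog) (Nat.cast_nonneg (α := ℝ) q)
    linarith

lemma misiurewicz [MeasurableSpace X] [BorelSpace X] [CompactSpace X] [Nonempty X]
    {T : X → X} (hTc : Continuous T) (ε : ℝ) (hε : 0 < ε) (c : ℝ)
    (hc : ∃ᶠ n : ℕ in atTop, c ≤ Real.log (spaN T (Finset.range n) ε) / n) :
    ∃ μ : Measure X, IsProbabilityMeasure μ ∧ MeasurePreserving T μ μ ∧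
      ∃ (k : ℕ) (f : X → Fin k), FM f ∧ ∀ q : ℕ, q * c ≤ Hf μ (code T f (Finset.range q)) := by
  have hTm : Measurable T := hTc.measurable
  have hex : ∀ n : ℕ, ∃ ν : ProbabilityMeasure X, 0 < n →
      ((∀ f : BoundedContinuousFunction X ℝ,
        |(∫ x, f (T x) ∂(ν : Measure X)) - ∫ x, f x ∂(ν : Measure X)| ≤ 2 * ‖f‖ / n) ∧
      ∀ (k : ℕ) (f : X → Fin k), FM f → (∀ x y, f x = f y → dist x y ≤ ε) → ∀ q : ℕ,
        q * Real.log (spaN T (Finset.range n) ε) ≤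
          n * Hf (ν : Measure X) (code T f (Finset.range q)) +
            q * Real.log (Fintype.card ({i // i ∈ Finset.range q} → Fin k))) := by
    intro n
    rcases Nat.eq_zero_or_pos n with h | h
    · exact ⟨⟨Measure.dirac (Classical.arbitrary X), inferInstance⟩, fun h' => by omega⟩
    · obtain ⟨ν, h1⟩ := mis_n hTc ε hε n h
      exact ⟨ν, fun _ => h1⟩
  choose μs hμs using hex
  have hNB : NeBot (atTop ⊓ 𝓟 {n : ℕ | c ≤ Real.log (spaN T (Finset.range n) ε) / n}) :=
    frequently_mem_iff_neBot.1 hc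
  let U : Ultrafilter ℕ := Ultrafilter.of
    (atTop ⊓ 𝓟 {n : ℕ | c ≤ Real.log (spaN T (Finset.range n) ε) / n})
  have hU : (U : Filter ℕ) ≤ _ := Ultrafilter.of_le _
  have hU1 : (U : Filter ℕ) ≤ atTop := hU.trans inf_le_left
  have hU2 : ∀ᶠ n in (U : Filter ℕ), c ≤ Real.log (spaN T (Finset.range n) ε) / n :=
    hU (mem_inf_of_right (Filter.mem_principal_self _))
  obtain ⟨ν, -, hν⟩ := isCompact_univ.ultrafilter_le_nhds (U.map μs) (by simp)
  have hν : Tendsto μs U (nhds ν) := hν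
  have hpos : ∀ᶠ n in (U : Filter ℕ), 0 < n := hU1 (eventually_gt_atTop 0)
  have hinv0 : ∀ C : ℝ, Tendsto (fun n : ℕ => C / n) U (nhds 0) := fun C =>
    (tendsto_const_div_atTop_nhds_zero_nat C).mono_left hU1
  have hlimf := ProbabilityMeasure.tendsto_iff_forall_integral_tendsto.1 hν
  have hpres : MeasurePreserving T (ν : Measure X) ν := by
    refine ⟨hTm, ?_⟩
    have : IsProbabilityMeasure ((ν : Measure X).map T) :=
      Measure.isProbabilityMeasure_map hTm.aemeasurable
    refine ext_of_forall_integral_eq_of_IsFiniteMeasure fun f => ?_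
    rw [integral_map hTm.aemeasurable f.continuous.aestronglyMeasurable]
    have l1 := hlimf f
    have l2 := hlimf (f.compContinuous ⟨T, hTc⟩)
    simp only [BoundedContinuousFunction.compContinuous_apply, ContinuousMap.coe_mk] at l2
    have l3 := (l2.sub l1).abs
    have l4 : |(∫ x, f (T x) ∂(ν : Measure X)) - ∫ x, f x ∂(ν : Measure X)| ≤ 0 := by
      refine le_of_tendsto_of_tendsto l3 (hinv0 (2 * ‖f‖)) ?_
      filter_upwards [hpos] with n hn
      exact (hμs n hn).1 f
    exact sub_eq_zero.1 (abs_nonpos_iff.1 l4)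
  obtain ⟨k, f, hfine, hf, hfr⟩ := exists_fine (ν : Measure X) ε hε
  refine ⟨ν, inferInstance, hpres, k, f, hf, fun q => ?_⟩
  have hlimH : Tendsto (fun n => Hf (μs n : Measure X) (code T f (Finset.range q))) U
      (nhds (Hf (ν : Measure X) (code T f (Finset.range q)))) := by
    unfold Hf
    refine tendsto_finsetSum _ fun g _ => ?_
    refine (Real.continuous_negMulLog.tendsto _).comp ?_
    have hatom : code T f (Finset.range q) ⁻¹' {g} =
        ⋂ i ∈ (Finset.univ : Finset {i // i ∈ Finset.range q}), T^[(i : ℕ)] ⁻¹' (f ⁻¹' {g i}) := by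
      ext x
      simp [code, funext_iff]
    have hnull : (ν : Measure X) (frontier (code T f (Finset.range q) ⁻¹' {g})) = 0 := by
      rw [hatom]
      refine null_frontier_biInter _ _ _ fun i _ => ?_
      have h1 : frontier (T^[(i : ℕ)] ⁻¹' (f ⁻¹' {g i})) ⊆
          T^[(i : ℕ)] ⁻¹' (frontier (f ⁻¹' {g i})) :=
        (hTc.iterate i).frontier_preimage_subset _
      refine measure_mono_null h1 ?_
      rw [(hpres.iterate i).measure_preimage isClosed_frontier.measurableSet.nullMeasurableSet]
      exact hfr _
    have := ProbabilityMeasure.tendsto_measure_of_null_frontier_of_tendsto' hν hnull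
    exact (ENNReal.tendsto_toReal (measure_ne_top _ _)).comp this
  have hlim2 := hlimH.add
    (hinv0 (q * Real.log (Fintype.card ({i // i ∈ Finset.range q} → Fin k))))
  rw [add_zero] at hlim2
  refine ge_of_tendsto hlim2 ?_
  filter_upwards [hpos, hU2] with n hn hcn
  have hn' : (0:ℝ) < n := by exact_mod_cast hn
  have h1 := (hμs n hn).2 k f hf hfine q
  rw [le_div_iff₀ hn'] at hcn
  have h2 := mul_le_mul_of_nonneg_left hcn (Nat.cast_nonneg (α := ℝ) q)
  have h3 : Hf (μs n : Measure X) (code T f (Finset.range q)) +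
      q * Real.log (Fintype.card ({i // i ∈ Finset.range q} → Fin k)) / n =
      (n * Hf (μs n : Measure X) (code T f (Finset.range q)) +
      q * Real.log (Fintype.card ({i // i ∈ Finset.range q} → Fin k))) / n := by
    field_simp
  rw [h3, le_div_iff₀ hn']
  linarith

open Pointwise

/-- Variational principle for sequence entropy: unless
(`K(A) = ∞` and `h_top(T) = 0`), the supremum of the measure-theoretic sequence entropies
over all `T`-invariant Borel probability measures equals the topological sequence entropy. -/
theorem stmt4 [MeasurableSpace X] [BorelSpace X] [CompactSpace X] [Nonempty X]
    (T : X → X) (hT : Continuous T) (A : ℕ → ℕ)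
    (h : ¬(KA A = ⊤ ∧ htopN T = 0)) :
    (⨆ (μ : Measure X) (_ : IsProbabilityMeasure μ ∧ MeasurePreserving T μ μ),
        seqEntMeas μ T A) = seqEntTop T A := by
  classical
  have hTm : Measurable T := hT.measurable
  have hIm : ∀ n : ℕ, (Finset.Icc 1 n).image (fun i => i - 1) = Finset.range n := by
    intro n; ext x
    simp only [Finset.mem_image, Finset.mem_Icc, Finset.mem_range]
    constructor
    · rintro ⟨a, ha, rfl⟩; omega
    · intro hx; exact ⟨x + 1, by omega, by omega⟩
  have hu0 : ∀ (F : Finset ℕ) (ε : ℝ) (n : ℕ), 0 ≤ Real.log (spaN T F ε) / n := fun F ε n =>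
    div_nonneg (Real.log_natCast_nonneg _) (Nat.cast_nonneg n)
  refine le_antisymm (iSup_le fun μ => iSup_le fun hμ => ?_) ?_
  · have := hμ.1
    exact goodwyn hT hμ.2 A
  set V : EReal := ⨆ (μ : Measure X) (_ : IsProbabilityMeasure μ ∧ MeasurePreserving T μ μ),
        seqEntMeas μ T A with hV
  have main : ∀ (ε : ℝ), 0 < ε → ∀ c : ℝ,
      (∃ᶠ n : ℕ in atTop, c ≤ Real.log (spaN T (Finset.range n) ε) / n) → ∀ m : ℕ,
      limsup (fun n : ℕ => ((((((Finset.Icc 1 n).image A + Finset.range m).card : ℝ) / n) * c : ℝ) :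
      EReal)) atTop ≤ V := by
    intro ε hε c hc m
    obtain ⟨μ, hμ, hpres, k, f, hf, hq⟩ := misiurewicz hT ε hε c hc
    refine (meas_lower hTm μ A hf c (Hc_lower hpres hf c hq) m).trans ?_
    exact le_iSup₂ (f := fun (μ : Measure X)
      (_ : IsProbabilityMeasure μ ∧ MeasurePreserving T μ μ) => seqEntMeas μ T A) μ ⟨hμ, hpres⟩
  by_cases hK : KA A = ⊤
  · -- infinite `K(A)`
    have hne : htopN T ≠ 0 := fun h0 => h ⟨hK, h0⟩
    obtain ⟨ε, hε, hpos⟩ : ∃ ε : ℝ, 0 < ε ∧ (0 : EReal) < limsup (fun n : ℕ =>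
        ((Real.log (spaN T (Finset.range n) ε) / n : ℝ) : EReal)) atTop := by
      by_contra! hcon
      apply hne
      unfold htopN seqEntTop
      simp only [hIm]
      refine le_antisymm (iSup₂_le hcon) ?_
      refine le_iSup₂_of_le 1 one_pos ?_
      refine le_limsup_of_frequently_le (Eventually.frequently (Eventually.of_forall fun n => ?_))
      exact_mod_cast hu0 _ _ _
    obtain ⟨c, hc0, hc⟩ := EReal.lt_iff_exists_real_btwn.1 hpos
    have hc0 : 0 < c := by exact_mod_cast hc0
    have hfr : ∃ᶠ n : ℕ in atTop, c ≤ Real.log (spaN T (Finset.range n) ε) / n := by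
      refine (frequently_lt_of_lt_limsup (h := hc)).mono fun n hn => ?_
      exact (EReal.coe_lt_coe_iff.1 hn).le
    have hVtop : V = ⊤ := by
      rw [EReal.eq_top_iff_forall_lt]
      intro b
      have hb : (((b + 1) / c : ℝ) : EReal) < KA A := by rw [hK]; exact EReal.coe_lt_top _
      unfold KA at hb
      obtain ⟨m, hm⟩ := lt_iSup_iff.1 hb
      have h1 := frequently_lt_of_lt_limsup (h := hm)
      have h2 : ((b + 1 : ℝ) : EReal) ≤ V := by
        refine le_trans ?_ (main ε hε c hfr m)
        refine le_limsup_of_frequently_le (h1.mono fun n hn => ?_)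
        rw [EReal.coe_lt_coe_iff, div_lt_iff₀ hc0] at hn
        rw [EReal.coe_le_coe_iff]
        exact hn.le
      refine lt_of_lt_of_le ?_ h2
      exact_mod_cast lt_add_one b
    rw [hVtop]
    exact le_top
  · -- finite `K(A)`
    unfold seqEntTop
    refine iSup₂_le fun ε₂ hε₂ => ?_
    obtain ⟨ε, hε, rfl⟩ : ∃ ε : ℝ, 0 < ε ∧ ε₂ = 2 * ε := ⟨ε₂ / 2, by linarith, by ring⟩
    rw [← EReal.le_of_forall_lt_iff_le]
    intro z hz
    obtain ⟨b, hb1, hb2⟩ := EReal.lt_iff_exists_real_btwn.1 hz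
    have hbz : b < z := by exact_mod_cast hb2
    obtain ⟨Kr, hKr, -⟩ := EReal.lt_iff_exists_real_btwn.1 (lt_top_iff_ne_top.2 hK)
    have hκ : ∀ m : ℕ, ∀ᶠ n : ℕ in atTop,
        (((Finset.Icc 1 n).image A + Finset.range m).card : ℝ) / n < Kr := by
      intro m
      have h1 : limsup (fun n : ℕ =>
        (((((Finset.Icc 1 n).image A + Finset.range m).card : ℝ) / n : ℝ) : EReal)) atTop < Kr :=
        lt_of_le_of_lt (le_iSup (fun m : ℕ => limsup (fun n : ℕ =>
          (((((Finset.Icc 1 n).image A + Finset.range m).card : ℝ) / n : ℝ) : EReal)) atTop) m) hKr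
      exact (eventually_lt_of_limsup_lt h1).mono fun n hn => EReal.coe_lt_coe_iff.1 hn
    have hKr0 : 0 < Kr := by
      obtain ⟨n, hn⟩ := (hκ 0).exists
      exact lt_of_le_of_lt (by positivity) hn
    set u : ℕ → ℝ := fun n => Real.log (spaN T (Finset.range n) ε) / n with hu
    obtain ⟨B, hB⟩ : ∃ B : ℝ, ∀ n, u n ≤ B := by
      refine ⟨Real.log (spaN T (Finset.range 1) (ε / 2)), fun n => ?_⟩
      have h1 := spaN_block T (Finset.range n) (ε / 2) (by linarith) 1 one_pos
      have h2 : ((Finset.range n + Finset.range 1).card : ℝ) ≤ n := by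
        have := Finset.card_add_le (s := Finset.range n) (t := Finset.range 1)
        simp only [Finset.card_range, mul_one] at this
        exact_mod_cast this
      have h0 : 0 ≤ Real.log (spaN T (Finset.range 1) (ε / 2)) := Real.log_natCast_nonneg _
      rw [mul_div_cancel₀ ε two_ne_zero, Nat.cast_one, div_one] at h1
      exact div_le_of_le_mul₀ (Nat.cast_nonneg n) h0
        (h1.trans ((mul_le_mul_of_nonneg_right h2 h0).trans (mul_comm _ _).le))
    have hbd : IsBoundedUnder (· ≤ ·) atTop u := isBoundedUnder_of ⟨B, hB⟩
    have hbd' : IsBoundedUnder (· ≥ ·) atTop u := isBoundedUnder_of ⟨0, fun n => hu0 _ _ _⟩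
    set L := limsup u atTop with hL
    obtain ⟨η, hη, hηz⟩ : ∃ η : ℝ, 0 < η ∧ Kr * (2 * η) = z - b :=
      ⟨(z - b) / (2 * Kr), by have := sub_pos.2 hbz; positivity, by field_simp⟩
    have hfr : ∃ᶠ n in atTop, L - η ≤ u n :=
      (frequently_lt_of_lt_limsup hbd'.isCoboundedUnder_le
        (show L - η < limsup u atTop by linarith)).mono fun n hn => hn.le
    obtain ⟨m, hm, hm0⟩ := ((eventually_lt_of_limsup_lt
      (show limsup u atTop < L + η by linarith) hbd).and (eventually_gt_atTop 0)).exists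
    have h3 := eventually_lt_of_limsup_lt ((main ε hε (L - η) hfr m).trans_lt hb1)
    refine limsup_le_of_le (h := ?_)
    filter_upwards [h3, hκ m] with n hn1 hn2
    rw [EReal.coe_lt_coe_iff] at hn1
    rw [EReal.coe_le_coe_iff]
    have h4 := spaN_block T ((Finset.Icc 1 n).image A) ε hε m hm0
    set s : ℝ := (((Finset.Icc 1 n).image A + Finset.range m).card : ℝ) with hs
    have hs0 : 0 ≤ s / n := by positivity
    have h5 : Real.log (spaN T ((Finset.Icc 1 n).image A) (2 * ε)) / n ≤ s / n * u m := by
      rw [div_mul_eq_mul_div]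
      exact div_le_div_of_nonneg_right h4 (Nat.cast_nonneg n)
    have h6 : s / n * u m ≤ s / n * (L - η) + s / n * (2 * η) := by
      rw [← mul_add]
      exact mul_le_mul_of_nonneg_left (by linarith) hs0
    have h7 : s / n * (2 * η) ≤ Kr * (2 * η) := mul_le_mul_of_nonneg_right hn2.le (by linarith)
    linarith
end

section
/- Let X be a compact metric space, T: X → X a continuous map, μ a T-invariant Borel probability measure on X, and A = (t_i)_{i≥1} a sequence of natural numbers. For finite F ⊂ ℕ, ε > 0, and δ ∈ (0,1), let spa(T,F,ε,δ) be the minimal number of Bowen (ε,F)-balls needed to cover a subset of X of μ-measure at least 1−δ. Then h^A_μ(T) ≤ lim_{δ→0⁺} lim_{ε→0⁺} limsup_n (1/n) log spa(T,{t₁,…,t_n},ε,δ). -/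
open Filter MeasureTheory

variable {X : Type*} [MetricSpace X]

/-- `spaMeasN μ T F ε δ` : the minimal number of Bowen `(ε,F)`-balls
`{x | ∀ i ∈ F, dist (T^[i] x) (T^[i] e) < ε}` needed to cover a subset of `X` of
`μ`-measure at least `1 − δ`. -/
noncomputable def spaMeasN [MeasurableSpace X] (μ : Measure X) (T : X → X)
    (F : Finset ℕ) (ε δ : ℝ) : ℕ :=
  sInf {k : ℕ | ∃ E : Finset X, E.card = k ∧
    ENNReal.ofReal (1 - δ) ≤
      μ (⋃ e ∈ E, {x : X | ∀ i ∈ F, dist (T^[i] x) (T^[i] e) < ε})}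

lemma aux_gibbs {ι : Type*} [Fintype ι] (p q : ι → ℝ) (hp : ∀ i, 0 ≤ p i) (hq : ∀ i, 0 < q i)
    (hp1 : ∑ i, p i = 1) (hq1 : ∑ i, q i ≤ 1) :
    ∑ i, Real.negMulLog (p i) ≤ ∑ i, p i * (-Real.log (q i)) := by
  have h : ∀ i, Real.negMulLog (p i) ≤ p i * (-Real.log (q i)) + (q i - p i) := by
    intro i
    rcases (hp i).eq_or_lt with h0 | h0
    · rw [← h0]; simp [(hq i).le]
    · have h1 := Real.log_le_sub_one_of_pos (div_pos (hq i) h0)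
      rw [Real.log_div (hq i).ne' h0.ne'] at h1
      have h2 := mul_le_mul_of_nonneg_left h1 h0.le
      have h3 : p i * (q i / p i - 1) = q i - p i := by field_simp
      rw [h3] at h2
      unfold Real.negMulLog
      linarith
  calc ∑ i, Real.negMulLog (p i) ≤ ∑ i, (p i * (-Real.log (q i)) + (q i - p i)) :=
        Finset.sum_le_sum fun i _ => h i
    _ = ∑ i, p i * (-Real.log (q i)) + (∑ i, q i - ∑ i, p i) := by
        rw [Finset.sum_add_distrib, Finset.sum_sub_distrib]
    _ ≤ _ := by linarith

lemma aux_separate [MeasurableSpace X] [BorelSpace X] [CompactSpace X]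
    (μ : Measure X) [IsProbabilityMeasure μ] {k : ℕ} (φ : X → Fin k) [Nonempty (Fin k)]
    (hφ : Measurable φ) (η : ℝ) (hη : 0 < η) :
    ∃ K : Set X, MeasurableSet K ∧ μ.real Kᶜ ≤ η ∧ ∃ ε : ℝ, 0 < ε ∧ ∃ c : X → Fin k,
      ∀ x ∈ K, ∀ e, dist x e < ε → c e = φ x := by
  classical
  have hk : (0 : ℝ) < k := by
    have : 0 < k := Fin.pos_iff_nonempty.2 inferInstance
    exact_mod_cast this
  have h1 : ∀ a : Fin k, ∃ C ⊆ φ ⁻¹' {a}, IsCompact C ∧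
      μ (φ ⁻¹' {a} \ C) < ENNReal.ofReal (η / k) := fun a =>
    (hφ (measurableSet_singleton a)).exists_isCompact_sdiff_lt (measure_ne_top _ _)
      (by simp only [ne_eq, ENNReal.ofReal_eq_zero, not_le]; positivity)
  choose C hCs hCc hCm using h1
  have hsep : ∀ a b : Fin k, a ≠ b → ∃ d > 0, ∀ x ∈ C a, ∀ y ∈ C b, d ≤ dist x y := by
    intro a b hab
    have hd : Disjoint (C a) (C b) := by
      rw [Set.disjoint_left]
      intro x hx hy
      exact hab ((hCs a hx : φ x = a).symm.trans (hCs b hy : φ x = b))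
    obtain ⟨r, hr, h⟩ := Metric.exists_pos_forall_lt_edist (hCc a) (hCc b).isClosed hd
    refine ⟨r, by exact_mod_cast hr, fun x hx y hy => ?_⟩
    have := h x hx y hy
    rw [edist_nndist] at this
    have h3 : r < nndist x y := by exact_mod_cast this
    rw [← coe_nndist]
    exact_mod_cast h3.le
  have hev : ∀ᶠ ε : ℝ in nhdsWithin 0 (Set.Ioi 0), ∀ a b : Fin k, a ≠ b →
      ∀ x ∈ C a, ∀ y ∈ C b, 2 * ε ≤ dist x y := by
    rw [eventually_all]; intro a
    rw [eventually_all]; intro b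
    by_cases hab : a = b
    · exact Eventually.of_forall fun ε h => absurd hab h
    obtain ⟨d, hd, h⟩ := hsep a b hab
    filter_upwards [Ioo_mem_nhdsGT (half_pos hd)] with ε hε _ x hx y hy
    have := h x hx y hy
    linarith [hε.2]
  obtain ⟨ε, hε, hε0⟩ := (hev.and self_mem_nhdsWithin).exists
  refine ⟨⋃ a, C a, MeasurableSet.iUnion fun a => (hCc a).measurableSet, ?_, ε, hε0, ?_⟩
  · have hsub : (⋃ a, C a)ᶜ ⊆ ⋃ a, (φ ⁻¹' {a} \ C a) := by
      intro x hx
      simp only [Set.mem_compl_iff, Set.mem_iUnion, not_exists] at hx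
      exact Set.mem_iUnion.2 ⟨φ x, rfl, hx _⟩
    calc μ.real (⋃ a, C a)ᶜ ≤ μ.real (⋃ a, (φ ⁻¹' {a} \ C a)) := measureReal_mono hsub
      _ ≤ ∑ a, μ.real (φ ⁻¹' {a} \ C a) := measureReal_iUnion_fintype_le _
      _ ≤ ∑ _a : Fin k, η / k := by
          refine Finset.sum_le_sum fun a _ => ?_
          exact ENNReal.toReal_le_of_le_ofReal (by positivity) (hCm a).le
      _ = η := by simp; field_simp
  · let c : X → Fin k := fun e =>
      if h : ∃ a, ∃ y ∈ C a, dist y e < ε then h.choose else Classical.arbitrary _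
    refine ⟨c, fun x hx e hxe => ?_⟩
    obtain ⟨a, ha⟩ := Set.mem_iUnion.1 hx
    have h : ∃ a, ∃ y ∈ C a, dist y e < ε := ⟨a, x, ha, hxe⟩
    have hce : c e = h.choose := dif_pos h
    obtain ⟨y, hy, hye⟩ := h.choose_spec
    rw [hce, (hCs a ha : φ x = a)]
    by_contra hne
    have h1 := hε _ _ hne y hy x ha
    have h2 := dist_triangle_right y x e
    linarith

set_option maxHeartbeats 1000000 in
lemma aux_key [MeasurableSpace X] [BorelSpace X]
    (T : X → X) (hT : Continuous T) (μ : Measure X) [IsProbabilityMeasure μ]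
    (hμ : MeasurePreserving T μ μ) (F : Finset ℕ) {k : ℕ} (φ : X → Fin k) (hφ : Measurable φ)
    (K : Set X) (hK : MeasurableSet K) (ε : ℝ) (c : X → Fin k)
    (hc : ∀ x ∈ K, ∀ e, dist x e < ε → c e = φ x) (E : Finset X) (hE : E.Nonempty)
    (hk : 0 < k) (γ : ℝ) (hγ0 : 0 < γ) (hγ1 : γ < 1) :
    ∑ g : {i // i ∈ F} → Fin k,
      Real.negMulLog (μ.real ((fun x (i : {i // i ∈ F}) => φ (T^[(i : ℕ)] x)) ⁻¹' {g})) ≤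
    Real.log E.card + F.card * (-Real.log (1 - γ) + Real.log (k / γ) *
      (μ.real Kᶜ + μ.real (⋃ e ∈ E, {x : X | ∀ i ∈ F, dist (T^[i] x) (T^[i] e) < ε})ᶜ)) := by
  classical
  set G : X → ({i // i ∈ F} → Fin k) := fun x i => φ (T^[(i : ℕ)] x) with hG
  set U : Set X := ⋃ e ∈ E, {x : X | ∀ i ∈ F, dist (T^[i] x) (T^[i] e) < ε} with hU
  set L : ℝ := Real.log (k / γ) with hL
  set a : ℝ := -Real.log (1 - γ) with ha
  have hkR : (1 : ℝ) ≤ k := by exact_mod_cast hk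
  have hk0 : (0 : ℝ) < k := by linarith
  have hL0 : 0 ≤ L := Real.log_nonneg (by rw [le_div_iff₀ hγ0]; linarith)
  have ha0 : 0 ≤ a := by
    have := Real.log_nonpos (x := 1 - γ) (by linarith) (by linarith)
    linarith
  have hN : (0 : ℝ) < E.card := by exact_mod_cast hE.card_pos
  have hGm : Measurable G := measurable_pi_lambda _ fun i =>
    hφ.comp (hT.iterate _).measurable
  have hUm : MeasurableSet U := by
    refine E.measurableSet_biUnion fun e _ => ?_
    have : {x : X | ∀ i ∈ F, dist (T^[i] x) (T^[i] e) < ε} =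
        ⋂ i ∈ F, {x : X | dist (T^[i] x) (T^[i] e) < ε} := by ext; simp
    rw [this]
    refine F.measurableSet_biInter fun i _ => ?_
    exact (isOpen_lt ((hT.iterate i).dist continuous_const) continuous_const).measurableSet
  let r : Fin k → Fin k → ℝ := fun b d => (if d = b then 1 - γ else 0) + γ / k
  have hγk : 0 < γ / k := by positivity
  have hr_ge : ∀ b d, γ / k ≤ r b d := by
    intro b d
    simp only [r]
    split_ifs <;> linarith
  have hr_pos : ∀ b d, 0 < r b d := fun b d => hγk.trans_le (hr_ge b d)
  have hr_sum : ∀ b, ∑ d, r b d = 1 := by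
    intro b
    simp only [r, Finset.sum_add_distrib, Finset.sum_ite_eq', Finset.mem_univ, if_true,
      Finset.sum_const, Finset.card_univ, Fintype.card_fin, nsmul_eq_mul]
    field_simp
    ring
  have hr_log : ∀ b d, -Real.log (r b d) ≤ L := by
    intro b d
    have h1 := Real.log_le_log hγk (hr_ge b d)
    have h2 : L = -Real.log (γ / k) := by rw [← Real.log_inv, inv_div]
    linarith
  have hr_log' : ∀ b, -Real.log (r b b) ≤ a := by
    intro b
    have h0 : 1 - γ ≤ r b b := by simp only [r, if_true]; linarith
    have h1 := Real.log_le_log (by linarith) h0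
    linarith
  let P : X → ({i // i ∈ F} → Fin k) → ℝ := fun e g =>
    ∏ i : {i // i ∈ F}, r (c (T^[(i : ℕ)] e)) (g i)
  have hP_pos : ∀ e g, 0 < P e g := fun e g => Finset.prod_pos fun i _ => hr_pos _ _
  have hP_sum : ∀ e, ∑ g, P e g = 1 := by
    intro e
    have := Finset.prod_univ_sum (fun _ : {i // i ∈ F} => (Finset.univ : Finset (Fin k)))
      (fun i d => r (c (T^[(i : ℕ)] e)) d)
    rw [Fintype.piFinset_univ] at this
    simp only [P]
    rw [← this]
    simp [hr_sum]
  let q : ({i // i ∈ F} → Fin k) → ℝ := fun g => (E.card : ℝ)⁻¹ * ∑ e ∈ E, P e g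
  have hq_pos : ∀ g, 0 < q g := fun g =>
    mul_pos (inv_pos.2 hN) (Finset.sum_pos (fun e _ => hP_pos e g) hE)
  have hq_sum : ∑ g, q g ≤ 1 := by
    simp only [q]
    rw [← Finset.mul_sum, Finset.sum_comm]
    simp only [hP_sum]
    simp [hN.ne']
  have hq_log : ∀ e ∈ E, ∀ g, -Real.log (q g) ≤
      Real.log E.card + ∑ i, -Real.log (r (c (T^[((i : {i // i ∈ F}) : ℕ)] e)) (g i)) := by
    intro e he g
    have h1 : (E.card : ℝ)⁻¹ * P e g ≤ q g :=
      mul_le_mul_of_nonneg_left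
        (Finset.single_le_sum (f := fun e => P e g) (fun e _ => (hP_pos e g).le) he)
        (inv_pos.2 hN).le
    have h2 := Real.log_le_log (mul_pos (inv_pos.2 hN) (hP_pos e g)) h1
    rw [Real.log_mul (inv_pos.2 hN).ne' (hP_pos e g).ne', Real.log_inv] at h2
    have h3 : Real.log (P e g) = ∑ i, Real.log (r (c (T^[((i : {i // i ∈ F}) : ℕ)] e)) (g i)) :=
      Real.log_prod fun i _ => (hr_pos _ _).ne'
    rw [Finset.sum_neg_distrib]
    linarith
  let B : X → ℝ := fun x => Real.log E.card +
    ∑ i : {i // i ∈ F}, (a + L * (T^[(i : ℕ)] ⁻¹' Kᶜ).indicator 1 x) +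
      F.card * L * Uᶜ.indicator 1 x
  have hind : ∀ (S : Set X) (x : X), 0 ≤ S.indicator (1 : X → ℝ) x := fun S x =>
    Set.indicator_nonneg (fun _ _ => zero_le_one) x
  have hB : ∀ x, -Real.log (q (G x)) ≤ B x := by
    intro x
    by_cases hx : x ∈ U
    · obtain ⟨e, he, hxe⟩ := Set.mem_iUnion₂.1 hx
      have h1 := hq_log e he (G x)
      have h2 : ∑ i, -Real.log (r (c (T^[((i : {i // i ∈ F}) : ℕ)] e)) (G x i)) ≤
          ∑ i : {i // i ∈ F}, (a + L * (T^[(i : ℕ)] ⁻¹' Kᶜ).indicator 1 x) := by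
        refine Finset.sum_le_sum fun i _ => ?_
        by_cases hxi : T^[(i : ℕ)] x ∈ K
        · have h3 : c (T^[(i : ℕ)] e) = G x i := hc _ hxi _ (hxe i i.2)
          rw [h3]
          have h4 := mul_nonneg hL0 (hind (T^[(i : ℕ)] ⁻¹' Kᶜ) x)
          linarith [hr_log' (G x i)]
        · rw [Set.indicator_of_mem (show x ∈ T^[(i : ℕ)] ⁻¹' Kᶜ from hxi)]
          have := hr_log (c (T^[(i : ℕ)] e)) (G x i)
          simp only [Pi.one_apply, mul_one]
          linarith
      have h5 : 0 ≤ F.card * L * Uᶜ.indicator 1 x := mul_nonneg (by positivity) (hind _ _)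
      simp only [B]
      linarith
    · obtain ⟨e, he⟩ := hE
      have h1 := hq_log e he (G x)
      have h2 : ∑ i, -Real.log (r (c (T^[((i : {i // i ∈ F}) : ℕ)] e)) (G x i)) ≤
          ∑ i : {i // i ∈ F}, L := Finset.sum_le_sum fun i _ => hr_log _ _
      have h3 : 0 ≤ ∑ i : {i // i ∈ F}, (a + L * (T^[(i : ℕ)] ⁻¹' Kᶜ).indicator 1 x) :=
        Finset.sum_nonneg fun i _ => add_nonneg ha0 (mul_nonneg hL0 (hind _ _))
      simp only [Finset.sum_const, Finset.card_univ, Fintype.card_coe, nsmul_eq_mul] at h2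
      simp only [B]
      rw [Set.indicator_of_mem (show x ∈ Uᶜ from hx)]
      simp only [Pi.one_apply, mul_one]
      linarith
  have hiter : ∀ i : ℕ, MeasurePreserving (T^[i]) μ μ := fun i => hμ.iterate i
  have hint1 : ∀ S : Set X, MeasurableSet S → Integrable (S.indicator (1 : X → ℝ)) μ :=
    fun S hS => (integrable_const (1 : ℝ)).indicator hS
  have hTK : ∀ i : ℕ, MeasurableSet (T^[i] ⁻¹' Kᶜ) := fun i => (hiter i).measurable hK.compl
  have hi1 : ∀ i : {i // i ∈ F}, Integrable (fun x =>
      a + L * (T^[(i : ℕ)] ⁻¹' Kᶜ).indicator (1 : X → ℝ) x) μ :=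
    fun i => (integrable_const a).add ((hint1 _ (hTK i)).const_mul L)
  have hi2 : Integrable (fun x => ∑ i : {i // i ∈ F},
      (a + L * (T^[(i : ℕ)] ⁻¹' Kᶜ).indicator (1 : X → ℝ) x)) μ :=
    integrable_finsetSum _ fun i _ => hi1 i
  have hi3 : Integrable (fun x => F.card * L * Uᶜ.indicator (1 : X → ℝ) x) μ :=
    (hint1 _ hUm.compl).const_mul _
  have hi12 : Integrable (fun x => Real.log E.card + ∑ i : {i // i ∈ F},
      (a + L * (T^[(i : ℕ)] ⁻¹' Kᶜ).indicator (1 : X → ℝ) x)) μ := (integrable_const _).add hi2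
  have hBint : Integrable B μ := hi12.add hi3
  have hBval : ∫ x, B x ∂μ = Real.log E.card + F.card * (a + L * (μ.real Kᶜ + μ.real Uᶜ)) := by
    simp only [B]
    rw [integral_add hi12 hi3, integral_add (integrable_const _) hi2,
      integral_finsetSum _ fun i _ => hi1 i, integral_const_mul,
      integral_indicator_one hUm.compl]
    have : ∀ i : {i // i ∈ F}, ∫ x, (a + L * (T^[(i : ℕ)] ⁻¹' Kᶜ).indicator (1 : X → ℝ) x) ∂μ =
        a + L * μ.real Kᶜ := by
      intro i
      rw [integral_add (integrable_const a) ((hint1 _ (hTK i)).const_mul L), integral_const_mul,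
        integral_indicator_one (hTK i)]
      have h6 : μ.real (T^[(i : ℕ)] ⁻¹' Kᶜ) = μ.real Kᶜ := by
        simp only [measureReal_def]
        rw [(hiter i).measure_preimage hK.compl.nullMeasurableSet]
      rw [h6]; simp
    simp only [this]
    simp
    ring
  have hp_eq : ∀ f : ({i // i ∈ F} → Fin k) → ℝ,
      ∑ g, μ.real (G ⁻¹' {g}) * f g = ∫ x, f (G x) ∂μ := by
    intro f
    have : IsProbabilityMeasure (μ.map G) := Measure.isProbabilityMeasure_map hGm.aemeasurable
    rw [← integral_map (f := f) hGm.aemeasurable (measurable_of_finite f).aestronglyMeasurable,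
      integral_fintype .of_finite]
    refine Finset.sum_congr rfl fun g _ => ?_
    rw [smul_eq_mul, map_measureReal_apply hGm (measurableSet_singleton g)]
  have hp1 : ∑ g, μ.real (G ⁻¹' {g}) = 1 := by
    have := hp_eq (fun _ => 1)
    simpa using this
  calc _ ≤ ∑ g, μ.real (G ⁻¹' {g}) * (-Real.log (q g)) :=
        aux_gibbs _ q (fun _ => measureReal_nonneg) hq_pos hp1 hq_sum
    _ = ∫ x, -Real.log (q (G x)) ∂μ := hp_eq _
    _ ≤ ∫ x, B x ∂μ := by
        refine integral_mono ?_ hBint hB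
        have : IsProbabilityMeasure (μ.map G) :=
          Measure.isProbabilityMeasure_map hGm.aemeasurable
        exact (Integrable.of_finite (μ := μ.map G)
          (f := fun g => -Real.log (q g))).comp_measurable hGm
    _ = _ := hBval

lemma aux_spa [MeasurableSpace X] [BorelSpace X] [CompactSpace X]
    (T : X → X) (hT : Continuous T) (μ : Measure X) [IsProbabilityMeasure μ]
    (F : Finset ℕ) (ε δ : ℝ) (hε : 0 < ε) (hδ0 : 0 < δ) (hδ : δ < 1) :
    ∃ E : Finset X, E.Nonempty ∧ E.card = spaMeasN μ T F ε δ ∧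
      μ.real (⋃ e ∈ E, {x : X | ∀ i ∈ F, dist (T^[i] x) (T^[i] e) < ε})ᶜ ≤ δ := by
  have hopen : ∀ e, IsOpen {x : X | ∀ i ∈ F, dist (T^[i] x) (T^[i] e) < ε} := by
    intro e
    have : {x : X | ∀ i ∈ F, dist (T^[i] x) (T^[i] e) < ε} =
        ⋂ i ∈ F, {x : X | dist (T^[i] x) (T^[i] e) < ε} := by ext; simp
    rw [this]
    exact isOpen_biInter_finset fun i _ =>
      isOpen_lt ((hT.iterate i).dist continuous_const) continuous_const
  have hne : {k : ℕ | ∃ E : Finset X, E.card = k ∧ ENNReal.ofReal (1 - δ) ≤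
      μ (⋃ e ∈ E, {x : X | ∀ i ∈ F, dist (T^[i] x) (T^[i] e) < ε})}.Nonempty := by
    obtain ⟨E, hE⟩ := isCompact_univ.elim_finite_subcover _ hopen
      (fun x _ => Set.mem_iUnion.2 ⟨x, fun i _ => by simpa using hε⟩)
    refine ⟨E.card, E, rfl, ?_⟩
    rw [Set.univ_subset_iff.1 hE, measure_univ]
    exact ENNReal.ofReal_le_one.2 (by linarith)
  obtain ⟨E, hc, hE⟩ := Nat.sInf_mem hne
  refine ⟨E, ?_, hc, ?_⟩
  · rw [Finset.nonempty_iff_ne_empty]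
    rintro rfl
    simp at hE
    linarith
  · have hm : MeasurableSet (⋃ e ∈ E, {x : X | ∀ i ∈ F, dist (T^[i] x) (T^[i] e) < ε}) :=
      E.measurableSet_biUnion fun e _ => (hopen e).measurableSet
    rw [probReal_compl_eq_one_sub hm]
    have := (ENNReal.ofReal_le_iff_le_toReal (measure_ne_top _ _)).1 hE
    rw [← measureReal_def] at this
    linarith

/-- For a continuous map `T` of a compact metric space, a `T`-invariant
Borel probability measure `μ` and a sequence `A` of naturals,
`h^A_μ(T) ≤ lim_{δ→0⁺} lim_{ε→0⁺} limsup_n (1/n) log spa(T,{t₁,…,t_n},ε,δ)`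
(the iterated limits of the antitone-in-`ε`, antitone-in-`δ` quantity are suprema over
`δ ∈ (0,1)` and `ε > 0`). -/
theorem stmt6 [MeasurableSpace X] [BorelSpace X] [CompactSpace X] [Nonempty X]
    (T : X → X) (hT : Continuous T) (A : ℕ → ℕ)
    (μ : Measure X) [IsProbabilityMeasure μ] (hμ : MeasurePreserving T μ μ) :
    seqEntMeas μ T A ≤
      ⨆ (δ : ℝ) (_ : 0 < δ) (_ : δ < 1) (ε : ℝ) (_ : 0 < ε),
        Filter.limsup
          (fun n : ℕ =>
            ((Real.log (spaMeasN μ T ((Finset.Icc 1 n).image A) ε δ) / n : ℝ) : EReal))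
          Filter.atTop := by
  classical
  refine iSup_le fun k => iSup_le fun ξ => iSup_le fun hξ => ?_
  obtain ⟨hξm, hξd, hξu⟩ := hξ
  have hex : ∀ x, ∃ a, x ∈ ξ a := fun x => Set.mem_iUnion.1 (hξu ▸ Set.mem_univ x)
  choose φ hφ using hex
  have hφiff : ∀ x a, x ∈ ξ a ↔ φ x = a := by
    refine fun x a => ⟨fun h => ?_, fun h => h ▸ hφ x⟩
    by_contra hne
    exact Set.disjoint_left.1 (hξd hne) (hφ x) h
  have hφm : Measurable φ := measurable_to_countable' fun a => by
    have : φ ⁻¹' {a} = ξ a := by ext x; simp [hφiff]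
    rw [this]; exact hξm a
  have hne : Nonempty (Fin k) := ⟨φ (Classical.arbitrary X)⟩
  have hk : 0 < k := Fin.pos_iff_nonempty.2 hne
  have hkR : (1 : ℝ) ≤ k := by exact_mod_cast hk
  have hHj : ∀ F : Finset ℕ, Hjoin μ T F ξ = ∑ g : {i // i ∈ F} → Fin k,
      Real.negMulLog (μ.real ((fun x (i : {i // i ∈ F}) => φ (T^[(i : ℕ)] x)) ⁻¹' {g})) := by
    intro F
    unfold Hjoin
    refine Finset.sum_congr rfl fun g _ => ?_
    rw [measureReal_def]
    congr 3
    ext x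
    simp [hφiff, funext_iff]
  rw [← EReal.le_of_forall_lt_iff_le]
  intro z hz
  obtain ⟨w, hw1, hw2⟩ := EReal.lt_iff_exists_real_btwn.1 hz
  have hwz : w < z := by exact_mod_cast hw2
  obtain ⟨τ, hτ⟩ : ∃ τ, τ = z - w := ⟨_, rfl⟩
  have hτ0 : 0 < τ := by linarith
  obtain ⟨γ, hγ⟩ : ∃ γ, γ = 1 - Real.exp (-(τ / 2)) := ⟨_, rfl⟩
  have hγ0 : 0 < γ := by
    have : Real.exp (-(τ / 2)) < 1 := by
      rw [← Real.exp_zero]; exact Real.exp_lt_exp.2 (by linarith)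
    linarith
  have hγ1 : γ < 1 := by linarith [Real.exp_pos (-(τ / 2))]
  have ha : -Real.log (1 - γ) = τ / 2 := by rw [hγ]; simp
  obtain ⟨L, hL⟩ : ∃ L, L = Real.log (k / γ) := ⟨_, rfl⟩
  have hL0 : 0 < L := by
    rw [hL]; exact Real.log_pos (by rw [lt_div_iff₀ hγ0]; linarith)
  obtain ⟨δ, hδ⟩ : ∃ δ, δ = min (1 / 2) (τ / (4 * L)) := ⟨_, rfl⟩
  have hδ0 : 0 < δ := by rw [hδ]; positivity
  have hδ1 : δ < 1 := by
    have := min_le_left (1 / 2) (τ / (4 * L))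
    linarith
  have hδL : L * δ ≤ τ / 4 := by
    have h := min_le_right (1 / 2) (τ / (4 * L))
    rw [← hδ, le_div_iff₀ (by positivity)] at h
    linarith
  obtain ⟨K, hKm, hKμ, ε, hε, c, hc⟩ := aux_separate μ φ hφm δ hδ0
  have hlim : Filter.limsup (fun n : ℕ =>
      ((Real.log (spaMeasN μ T ((Finset.Icc 1 n).image A) ε δ) / n : ℝ) : EReal)) atTop < w := by
    refine lt_of_le_of_lt ?_ hw1
    exact le_iSup_of_le δ (le_iSup_of_le hδ0 (le_iSup_of_le hδ1
      (le_iSup_of_le ε (le_iSup_of_le hε le_rfl))))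
  have hev := eventually_lt_of_limsup_lt hlim
  refine limsup_le_of_le (by isBoundedDefault) ?_
  filter_upwards [hev, eventually_ge_atTop 1] with n hn hn1
  have hn' : Real.log (spaMeasN μ T ((Finset.Icc 1 n).image A) ε δ) / n < w := by
    exact_mod_cast hn
  have hn0 : (0 : ℝ) < n := by exact_mod_cast hn1
  suffices h : Hjoin μ T ((Finset.Icc 1 n).image A) ξ / n ≤ z by exact_mod_cast h
  set F := (Finset.Icc 1 n).image A with hF
  have hFc : (F.card : ℝ) ≤ n := by
    have : F.card ≤ n := Finset.card_image_le.trans (by simp)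
    exact_mod_cast this
  obtain ⟨E, hEne, hEc, hEμ⟩ := aux_spa T hT μ F ε δ hε hδ0 hδ1
  have hkey := aux_key T hT μ hμ F φ hφm K hKm ε c hc E hEne hk γ hγ0 hγ1
  rw [← hHj F, ha, ← hL, hEc] at hkey
  set u := μ.real (⋃ e ∈ E, {x : X | ∀ i ∈ F, dist (T^[i] x) (T^[i] e) < ε})ᶜ
  have h1 : L * (μ.real Kᶜ + u) ≤ τ / 2 := by
    have := mul_le_mul_of_nonneg_left (add_le_add hKμ hEμ) hL0.le
    linarith
  have h2 : (F.card : ℝ) * (τ / 2 + L * (μ.real Kᶜ + u)) ≤ n * τ := by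
    calc (F.card : ℝ) * (τ / 2 + L * (μ.real Kᶜ + u)) ≤ F.card * τ :=
          mul_le_mul_of_nonneg_left (by linarith) (by positivity)
      _ ≤ n * τ := mul_le_mul_of_nonneg_right hFc hτ0.le
  rw [div_lt_iff₀ hn0] at hn'
  rw [div_le_iff₀ hn0]
  have h3 : (n : ℝ) * τ = z * n - w * n := by rw [hτ]; ring
  linarith
end
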